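/- arXiv:2405.13734 — 9 statements merged into one kernel-verified Lean document; each statement's English description precedes it below -/
import Mathlib

section
/- Let I = I_1 × ⋯ × I_n ⊂ ℝ^n be an axis-parallel box where each I_i = [a_i, a_i + l_i) is a half-open interval with a_i ∈ ℝ and integer length l_i ∈ ℤ, l_i ≥ 0. Let M be an n×n lower-triangular real matrix with all diagonal entries equal to 1 (unipotent). Then the set ℤ^n ∩ M·I (where M·I denotes the image of I under the linear map M) is finite of cardinality l_1 · l_2 · ⋯ · l_n. -/
/-!
The inverse `N` of `M` is again lower unitriangular. For an integral point `y` we have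
`(N y)ᵢ = yᵢ + ∑_{j < i} Nᵢⱼ yⱼ` with `yᵢ ∈ ℤ`, so that
`⌊(N y)ᵢ - aᵢ⌋ = yᵢ + ⌊∑_{j < i} Nᵢⱼ yⱼ - aᵢ⌋`. Hence `y ↦ ⌊N y - a⌋` is a triangular
self-map of `ℤⁿ`: its `i`-th coordinate translates `yᵢ` by a quantity depending only on the earlier
coordinates. Such a map is bijective, and `y ∈ M·I` iff its image lies in `∏ᵢ {0, …, lᵢ - 1}`.
-/

open Matrix

theorem bijective_of_triangular {ι : Type*} [Preorder ι] [WellFoundedLT ι] {α β : ι → Type*}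
    (e : ∀ i, (∀ j : Set.Iio i, α j) → α i ≃ β i) :
    Function.Bijective fun (x : ∀ i, α i) i => e i (fun j => x j) (x i) := by
  constructor
  · intro x y hxy
    funext i
    induction i using WellFoundedLT.induction with
    | ind i ih =>
      have hprev : (fun j : Set.Iio i => x j) = fun j : Set.Iio i => y j :=
        funext fun j => ih j j.2
      have hi : e i (fun j => x j) (x i) = e i (fun j => y j) (y i) := congrFun hxy i
      rw [hprev] at hi
      exact (e i _).injective hi
  · intro z
    let step (i : ι) (prev : ∀ j, j < i → α j) : α i := (e i fun j => prev j j.2).symm (z i)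
    refine ⟨WellFoundedLT.fix step, funext fun i => ?_⟩
    dsimp only
    rw [WellFoundedLT.fix_eq step i]
    exact (e i _).apply_symm_apply (z i)

/-- A lower-triangular unipotent matrix: the entries above the diagonal are `0` and those on it
are `1`. -/
structure IsLowerUnitriangular {ι R : Type*} [LT ι] [Zero R] [One R] (M : Matrix ι ι R) :
    Prop where
  isLowerTriangular : M.IsLowerTriangular
  apply_self (i : ι) : M i i = 1

theorem mul_apply_self_of_isLowerTriangular {ι R : Type*} [Fintype ι] [LinearOrder ι]
    [NonUnitalNonAssocSemiring R] {A B : Matrix ι ι R} (hA : A.IsLowerTriangular)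
    (hB : B.IsLowerTriangular) (i : ι) : (A * B) i i = A i i * B i i := by
  rw [mul_apply]
  refine Finset.sum_eq_single_of_mem i (Finset.mem_univ i) fun j _ hji => ?_
  rcases hji.lt_or_gt with hlt | hgt
  · rw [hB hlt, mul_zero]
  · rw [hA hgt, zero_mul]

namespace IsLowerUnitriangular

variable {ι R : Type*} [Fintype ι] [LinearOrder ι]

theorem mulVec_apply [NonAssocSemiring R] {M : Matrix ι ι R} (hM : IsLowerUnitriangular M)
    (x : ι → R) (i : ι) : (M *ᵥ x) i = x i + ∑ j : Set.Iio i, M i j * x j := by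
  have hsum : ∑ j with j < i, M i j * x j = ∑ j : Set.Iio i, M i j * x j :=
    Finset.sum_subtype _ (by simp) _
  have hle : ∑ j with ¬ j < i, M i j * x j = x i := by
    rw [Finset.sum_eq_single_of_mem i (by simp), hM.apply_self, one_mul]
    intro j hj hji
    have hij : i < j := lt_of_le_of_ne (by simpa using hj) hji.symm
    rw [hM.isLowerTriangular hij, zero_mul]
  rw [mulVec, dotProduct, ← Finset.sum_filter_not_add_sum_filter _ (· < i), hle, hsum]

section CommRing

variable [CommRing R] {M : Matrix ι ι R}

theorem det_eq_one (hM : IsLowerUnitriangular M) : M.det = 1 := by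
  rw [det_of_isLowerTriangular M hM.isLowerTriangular]
  exact Finset.prod_eq_one fun i _ => hM.apply_self i

theorem isUnit_det (hM : IsLowerUnitriangular M) : IsUnit M.det :=
  hM.det_eq_one ▸ isUnit_one

theorem inv (hM : IsLowerUnitriangular M) : IsLowerUnitriangular M⁻¹ := by
  let := M.invertibleOfIsUnitDet hM.isUnit_det
  have hinv : M⁻¹.IsLowerTriangular :=
    blockTriangular_inv_of_blockTriangular hM.isLowerTriangular
  refine ⟨hinv, fun i => ?_⟩
  rw [← one_apply_eq i, ← nonsing_inv_mul M hM.isUnit_det,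
    mul_apply_self_of_isLowerTriangular hinv hM.isLowerTriangular, hM.apply_self, mul_one]

end CommRing

theorem bijective_floor_mulVec_sub [Ring R] [LinearOrder R] [IsOrderedRing R] [FloorRing R]
    {N : Matrix ι ι R} (hN : IsLowerUnitriangular N) (a : ι → R) :
    Function.Bijective fun (y : ι → ℤ) i => ⌊(N *ᵥ fun j => (y j : R)) i - a i⌋ := by
  let shift (i : ι) (prev : Set.Iio i → ℤ) : ℤ := ⌊∑ j : Set.Iio i, N i j * (prev j : R) - a i⌋
  have hfloor (y : ι → ℤ) (i : ι) :
      ⌊(N *ᵥ fun j => (y j : R)) i - a i⌋ = y i + shift i fun j => y j := by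
    rw [hN.mulVec_apply, add_sub_assoc, Int.floor_intCast_add]
  simp only [hfloor]
  exact bijective_of_triangular fun i prev => Equiv.addRight (shift i prev)

end IsLowerUnitriangular

theorem mem_image_mulVec_iff {ι R : Type*} [Fintype ι] [DecidableEq ι] [CommRing R]
    {M : Matrix ι ι R} (hM : IsUnit M.det) {s : Set (ι → R)} {v : ι → R} :
    v ∈ M.mulVec '' s ↔ M⁻¹ *ᵥ v ∈ s := by
  have hleft : Function.LeftInverse M⁻¹.mulVec M.mulVec := fun x => by
    rw [mulVec_mulVec, nonsing_inv_mul M hM, one_mulVec]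
  have hright : Function.RightInverse M⁻¹.mulVec M.mulVec := fun x => by
    rw [mulVec_mulVec, mul_nonsing_inv M hM, one_mulVec]
  rw [Set.image_eq_preimage_of_inverse hleft hright, Set.mem_preimage]

theorem mem_pi_Ico_add_intCast_iff {ι R : Type*} [Fintype ι] [DecidableEq ι] [Ring R]
    [LinearOrder R] [IsOrderedRing R] [FloorRing R] {a x : ι → R} {l : ι → ℤ} :
    x ∈ Set.univ.pi (fun i => Set.Ico (a i) (a i + (l i : R))) ↔
      (fun i => ⌊x i - a i⌋) ∈ Fintype.piFinset fun i => Finset.Ico 0 (l i) := by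
  simp only [Set.mem_univ_pi, Set.mem_Ico, Fintype.mem_piFinset, Finset.mem_Ico,
    Int.floor_nonneg, Int.floor_lt, sub_nonneg, sub_lt_iff_lt_add']

theorem stmt0_general {ι R : Type*} [Fintype ι] [LinearOrder ι] [CommRing R] [LinearOrder R]
    [IsStrictOrderedRing R] [FloorRing R] (a : ι → R) (l : ι → ℤ) {M : Matrix ι ι R}
    (hM : IsLowerUnitriangular M) :
    let I : Set (ι → R) := Set.univ.pi fun i => Set.Ico (a i) (a i + (l i : R))
    let S : Set (ι → R) := {v | (∀ i, ∃ k : ℤ, v i = (k : R)) ∧ v ∈ M.mulVec '' I}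
    S.Finite ∧ S.ncard = ∏ i, (l i).toNat := by
  intro I S
  let coe (y : ι → ℤ) (i : ι) : R := y i
  let floors (y : ι → ℤ) (i : ι) : ℤ := ⌊(M⁻¹ *ᵥ coe y) i - a i⌋
  let F : Finset (ι → ℤ) := Fintype.piFinset fun i => Finset.Ico 0 (l i)
  have hcoe : Function.Injective coe := Int.cast_injective.comp_left
  have hfloors : Function.Bijective floors := hM.inv.bijective_floor_mulVec_sub a
  have hmem (y : ι → ℤ) : coe y ∈ M.mulVec '' I ↔ floors y ∈ F :=
    (mem_image_mulVec_iff hM.isUnit_det).trans mem_pi_Ico_add_intCast_iff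
  have hS : S = coe '' (floors ⁻¹' F) := by
    ext v
    constructor
    · rintro ⟨hint, hv⟩
      choose y hy using hint
      obtain rfl : v = coe y := funext hy
      exact ⟨y, (hmem y).1 hv, rfl⟩
    · rintro ⟨y, hy, rfl⟩
      exact ⟨fun i => ⟨y i, rfl⟩, (hmem y).2 hy⟩
  have hcard : F.card = ∏ i, (l i).toNat := by
    simp only [F, Fintype.card_piFinset, Int.card_Ico, sub_zero]
  rw [hS]
  refine ⟨(F.finite_toSet.preimage hfloors.injective.injOn).image coe, ?_⟩
  rw [Set.ncard_image_of_injective _ hcoe, Set.ncard_preimage_of_injective_subset_range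
    hfloors.injective (by simp [hfloors.surjective.range_eq]), Set.ncard_coe_finset, hcard]

/-- Let `I = I₁ × ⋯ × Iₙ ⊂ ℝⁿ` be an axis-parallel box where each
`Iᵢ = [aᵢ, aᵢ + lᵢ)` is a half-open interval with `aᵢ ∈ ℝ` and integer length `lᵢ ∈ ℤ`,
`lᵢ ≥ 0`. Let `M` be a lower-triangular unipotent real matrix. Then the set
`ℤⁿ ∩ M·I` is finite of cardinality `l₁ ⋯ lₙ`. -/
theorem stmt0 (n : ℕ) (a : Fin n → ℝ) (l : Fin n → ℤ) (hl : ∀ i, 0 ≤ l i)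
    (M : Matrix (Fin n) (Fin n) ℝ)
    (htri : ∀ i j, i < j → M i j = 0) (hdiag : ∀ i, M i i = 1) :
    let I : Set (Fin n → ℝ) := Set.univ.pi fun i => Set.Ico (a i) (a i + (l i : ℝ))
    let S : Set (Fin n → ℝ) := {v | (∀ i, ∃ k : ℤ, v i = (k : ℝ)) ∧ v ∈ M.mulVec '' I}
    S.Finite ∧ (S.ncard : ℤ) = ∏ i, l i := by
  simpa only [← Nat.cast_inj (R := ℤ), Nat.cast_prod, Int.toNat_of_nonneg (hl _)] using
    stmt0_general a l ⟨fun i j hij => htri i j hij, hdiag⟩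
end

section
/- Let n ≥ 1 be an integer, let f ∈ ℝ[X] be a monic polynomial of degree n, and let ε > 0. Then the set {x ∈ ℝ : |f(x)| ≤ ε} has Lebesgue measure at most 2 n ε^{1/n}. -/
/-!
A monic polynomial `f` of degree `n` over `ℂ` is a product of `n` factors `X - a`, so the distance
from a point `x` to the nearest root is at most `‖f(x)‖ ^ (1 / n)`. Taking real parts does not
increase distances to a real point, hence the real points where `‖f‖ ≤ ε` are covered by `n`
intervals of radius `ε ^ (1 / n)`, centred at the real parts of the roots.
-/

open MeasureTheory

lemma exists_mem_pow_card_le_prod_map {ι R : Type*} [CommMonoidWithZero R] [LinearOrder R]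
    [ZeroLEOneClass R] [PosMulMono R] {s : Multiset ι} (hs : s ≠ 0) (g : ι → R)
    (hg : ∀ i ∈ s, 0 ≤ g i) : ∃ i ∈ s, g i ^ s.card ≤ (s.map g).prod := by
  obtain ⟨i, hi, hmin⟩ := Multiset.exists_min_image g hs
  refine ⟨i, hi, ?_⟩
  simpa using Multiset.prod_map_le_prod_map₀ (fun _ ↦ g i) g (fun _ _ ↦ hg i hi) hmin

section NormedField

variable {K : Type*} [NormedField K] {f : Polynomial K}

lemma norm_eval_eq_prod_norm_sub_roots (hsplits : f.Splits) (hf : f.Monic) (x : K) :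
    ‖f.eval x‖ = (f.roots.map fun a ↦ ‖x - a‖).prod := by
  rw [hsplits.eval_eq_prod_roots_of_monic hf]
  simpa using map_multiset_prod (normHom : K →*₀ ℝ) (f.roots.map (x - ·))

lemma exists_mem_roots_norm_sub_pow_le (hsplits : f.Splits) (hf : f.Monic)
    (hdeg : f.natDegree ≠ 0) (x : K) :
    ∃ a ∈ f.roots, ‖x - a‖ ^ f.natDegree ≤ ‖f.eval x‖ := by
  have hroots : f.roots ≠ 0 := by
    rwa [← Multiset.card_pos, ← hsplits.natDegree_eq_card_roots, Nat.pos_iff_ne_zero]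
  rw [norm_eval_eq_prod_norm_sub_roots hsplits hf, hsplits.natDegree_eq_card_roots]
  exact exists_mem_pow_card_le_prod_map hroots _ fun a _ ↦ norm_nonneg (x - a)

lemma exists_mem_roots_norm_sub_le_rpow (hsplits : f.Splits) (hf : f.Monic)
    (hdeg : f.natDegree ≠ 0) (x : K) :
    ∃ a ∈ f.roots, ‖x - a‖ ≤ ‖f.eval x‖ ^ (1 / f.natDegree : ℝ) := by
  obtain ⟨a, ha, hle⟩ := exists_mem_roots_norm_sub_pow_le hsplits hf hdeg x
  refine ⟨a, ha, ?_⟩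
  rwa [one_div, Real.le_rpow_inv_iff_of_pos (norm_nonneg _) (norm_nonneg _) (by positivity),
    Real.rpow_natCast]

end NormedField

lemma setOf_norm_eval_ofReal_le_subset_biUnion_closedBall {f : Polynomial ℂ} (hf : f.Monic)
    (hdeg : f.natDegree ≠ 0) (ε : ℝ) :
    {x : ℝ | ‖f.eval (x : ℂ)‖ ≤ ε} ⊆
      ⋃ a ∈ f.roots.toFinset, Metric.closedBall a.re (ε ^ (1 / f.natDegree : ℝ)) := by
  intro x (hx : ‖f.eval (x : ℂ)‖ ≤ ε)
  obtain ⟨a, ha, hdist⟩ :=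
    exists_mem_roots_norm_sub_le_rpow (IsAlgClosed.splits f) hf hdeg (x : ℂ)
  refine Set.mem_biUnion (Multiset.mem_toFinset.mpr ha) ?_
  calc
    dist x a.re = |((x : ℂ) - a).re| := by simp [Real.dist_eq]
    _ ≤ ‖(x : ℂ) - a‖ := Complex.abs_re_le_norm _
    _ ≤ ‖f.eval (x : ℂ)‖ ^ (1 / f.natDegree : ℝ) := hdist
    _ ≤ ε ^ (1 / f.natDegree : ℝ) := by gcongr

lemma volume_biUnion_closedBall_le {ι : Type*} (s : Finset ι) (c : ι → ℝ) (r : ℝ) :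
    volume (⋃ i ∈ s, Metric.closedBall (c i) r) ≤ ENNReal.ofReal (2 * s.card * r) := by
  calc
    volume (⋃ i ∈ s, Metric.closedBall (c i) r)
        ≤ ∑ i ∈ s, volume (Metric.closedBall (c i) r) := measure_biUnion_finset_le _ _
    _ = ENNReal.ofReal s.card * ENNReal.ofReal (2 * r) := by simp [Real.volume_closedBall]
    _ = ENNReal.ofReal (2 * s.card * r) := by
      rw [← ENNReal.ofReal_mul (Nat.cast_nonneg _), mul_left_comm, mul_assoc]

theorem stmt3_general {f : Polynomial ℂ} (hf : f.Monic) (hdeg : f.natDegree ≠ 0) {ε : ℝ}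
    (hε : 0 ≤ ε) :
    volume {x : ℝ | ‖f.eval (x : ℂ)‖ ≤ ε} ≤
      ENNReal.ofReal (2 * f.natDegree * ε ^ (1 / f.natDegree : ℝ)) := by
  have hcard : f.roots.toFinset.card ≤ f.natDegree :=
    f.roots.toFinset_card_le.trans f.card_roots'
  calc
    volume {x : ℝ | ‖f.eval (x : ℂ)‖ ≤ ε}
        ≤ volume (⋃ a ∈ f.roots.toFinset,
            Metric.closedBall a.re (ε ^ (1 / f.natDegree : ℝ))) :=
      measure_mono (setOf_norm_eval_ofReal_le_subset_biUnion_closedBall hf hdeg ε)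
    _ ≤ ENNReal.ofReal (2 * f.roots.toFinset.card * ε ^ (1 / f.natDegree : ℝ)) :=
      volume_biUnion_closedBall_le _ _ _
    _ ≤ ENNReal.ofReal (2 * f.natDegree * ε ^ (1 / f.natDegree : ℝ)) := by gcongr

/-- Let `n ≥ 1`, let `f ∈ ℝ[X]` be monic of degree `n`, and let `ε > 0`.
Then the set `{x ∈ ℝ : |f(x)| ≤ ε}` has Lebesgue measure at most `2 n ε^(1/n)`. -/
theorem stmt3 (n : ℕ) (hn : 1 ≤ n) (f : Polynomial ℝ) (hf : f.Monic)
    (hdeg : f.natDegree = n) (ε : ℝ) (hε : 0 < ε) :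
    volume {x : ℝ | |f.eval x| ≤ ε} ≤ ENNReal.ofReal (2 * n * ε ^ ((1 : ℝ) / n)) := by
  subst hdeg
  have hdeg_map : (f.map Complex.ofRealHom).natDegree ≠ 0 := by
    rwa [hf.natDegree_map, ← Nat.one_le_iff_ne_zero]
  have heval (x : ℝ) : (f.map Complex.ofRealHom).eval (x : ℂ) = f.eval x :=
    Polynomial.eval_map_apply Complex.ofRealHom x
  simpa [heval] using stmt3_general (hf.map Complex.ofRealHom) hdeg_map hε.le
end

section
/- For every orthogonal matrix k ∈ O_2(ℝ) and every binary cubic form f with real coefficients, q(k·f) = q(f), where k·f is the binary cubic form defined by (k·f)(v) = det(k)^{-1} · f(kᵀ v) for v ∈ ℝ², and q(aX³ + bX²Y + cXY² + dY³) = 5a² + b² + c² + 5d² + 2ac + 2bd. -/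
open Matrix

/-!
The integral of `f ^ 2` over the unit circle is `π / 8` times `q f`. An orthogonal matrix acts on
the circle by a rotation, possibly after a reflection, so it preserves this integral, and the factor
`(det k)⁻¹ = ±1` disappears on squaring.
-/

open Real intervalIntegral

/-- The point of the unit circle at angle `θ`, as a column vector on which matrices act. -/
noncomputable def circlePoint (θ : ℝ) : Fin 2 → ℝ :=
  ![cos θ, sin θ]

/-- The moment `∫ xᵐ yⁿ` of the unit circle with respect to arc length. -/
noncomputable def circleMoment (m n : ℕ) : ℝ :=
  ∫ θ in 0..2 * π, cos θ ^ m * sin θ ^ n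

/-- The binary cubic form `aX³ + bX²Y + cXY² + dY³` as a function of a vector. -/
def binaryCubic {R : Type*} [CommSemiring R] (a b c d : R) (v : Fin 2 → R) : R :=
  a * v 0 ^ 3 + b * v 0 ^ 2 * v 1 + c * v 0 * v 1 ^ 2 + d * v 1 ^ 3

section OrthogonalInvariance

theorem periodic_circlePoint : Function.Periodic circlePoint (2 * π) := fun θ => by
  simp only [circlePoint, cos_add_two_pi, sin_add_two_pi]

theorem reflection_mulVec_circlePoint (θ : ℝ) :
    !![1, 0; 0, -1] *ᵥ circlePoint θ = circlePoint (-θ) := by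
  ext i
  fin_cases i <;> simp [circlePoint, mulVec_eq_sum]

theorem exists_angle_of_sq_add_sq_eq_one {x y : ℝ} (h : x ^ 2 + y ^ 2 = 1) :
    ∃ φ : ℝ, cos φ = x ∧ sin φ = y := by
  have hnorm : ‖(⟨x, y⟩ : ℂ)‖ = 1 := by
    rw [Complex.norm_eq_sqrt_sq_add_sq, h, sqrt_one]
  obtain ⟨φ, hφ⟩ := (Complex.norm_eq_one_iff _).mp hnorm
  exact ⟨φ, by rw [← Complex.exp_ofReal_mul_I_re, hφ], by rw [← Complex.exp_ofReal_mul_I_im, hφ]⟩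

theorem exists_mulVec_circlePoint_eq_add {k : Matrix (Fin 2) (Fin 2) ℝ}
    (hk : k ∈ specialOrthogonalGroup (Fin 2) ℝ) :
    ∃ φ : ℝ, ∀ θ : ℝ, k *ᵥ circlePoint θ = circlePoint (θ + φ) := by
  obtain ⟨hdiag, hanti, hunit⟩ := mem_specialOrthogonalGroup_fin_two_iff.mp hk
  obtain ⟨φ, hcos, hsin⟩ := exists_angle_of_sq_add_sq_eq_one (x := k 0 0) (y := k 1 0)
    (by simpa [hanti] using hunit)
  refine ⟨φ, fun θ => ?_⟩
  ext i
  fin_cases i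
  · simp [circlePoint, mulVec_eq_sum, cos_add, hcos, hsin, hanti, sub_eq_add_neg]
  · simp [circlePoint, mulVec_eq_sum, sin_add, hcos, hsin, ← hdiag, add_comm, mul_comm]

theorem det_sq_of_mem_orthogonalGroup {n R : Type*} [Fintype n] [DecidableEq n] [CommRing R]
    {k : Matrix n n R} (hk : k ∈ orthogonalGroup n R) : k.det ^ 2 = 1 := by
  have h := congrArg det ((mem_orthogonalGroup_iff n R).mp hk)
  rwa [det_mul, det_transpose, det_one, ← sq] at h

theorem mul_reflection_mem_specialOrthogonalGroup {R : Type*} [CommRing R]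
    {k : Matrix (Fin 2) (Fin 2) R} (hk : k ∈ orthogonalGroup (Fin 2) R) (hdet : k.det = -1) :
    k * !![1, 0; 0, -1] ∈ specialOrthogonalGroup (Fin 2) R := by
  have hrefl : (!![1, 0; 0, -1] : Matrix (Fin 2) (Fin 2) R) ∈ orthogonalGroup (Fin 2) R := by
    rw [mem_orthogonalGroup_iff]
    ext i j
    fin_cases i <;> fin_cases j <;> simp [mul_apply]
  exact mem_specialOrthogonalGroup_iff.mpr ⟨mul_mem hk hrefl, by simp [det_mul, hdet]⟩

variable {E : Type*} [NormedAddCommGroup E] [NormedSpace ℝ E]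

theorem integral_circlePoint_add (F : (Fin 2 → ℝ) → E) (φ : ℝ) :
    ∫ θ in 0..2 * π, F (circlePoint (θ + φ)) = ∫ θ in 0..2 * π, F (circlePoint θ) := by
  have hper := (periodic_circlePoint.comp F).intervalIntegral_add_eq φ 0
  rw [integral_comp_add_right fun θ => F (circlePoint θ)]
  simpa [add_comm] using hper

theorem integral_circlePoint_neg (F : (Fin 2 → ℝ) → E) :
    ∫ θ in 0..2 * π, F (circlePoint (-θ)) = ∫ θ in 0..2 * π, F (circlePoint θ) := by
  have hper := (periodic_circlePoint.comp F).intervalIntegral_add_eq (-(2 * π)) 0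
  rw [integral_comp_neg fun θ => F (circlePoint θ)]
  simpa using hper

theorem integral_mulVec_circlePoint_of_mem_specialOrthogonalGroup
    {k : Matrix (Fin 2) (Fin 2) ℝ} (hk : k ∈ specialOrthogonalGroup (Fin 2) ℝ)
    (F : (Fin 2 → ℝ) → E) :
    ∫ θ in 0..2 * π, F (k *ᵥ circlePoint θ) = ∫ θ in 0..2 * π, F (circlePoint θ) := by
  obtain ⟨φ, hφ⟩ := exists_mulVec_circlePoint_eq_add hk
  simp only [hφ, integral_circlePoint_add]

theorem integral_mulVec_circlePoint {k : Matrix (Fin 2) (Fin 2) ℝ}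
    (hk : k ∈ orthogonalGroup (Fin 2) ℝ) (F : (Fin 2 → ℝ) → E) :
    ∫ θ in 0..2 * π, F (k *ᵥ circlePoint θ) = ∫ θ in 0..2 * π, F (circlePoint θ) := by
  rcases sq_eq_one_iff.mp (det_sq_of_mem_orthogonalGroup hk) with hone | hneg
  · exact integral_mulVec_circlePoint_of_mem_specialOrthogonalGroup
      (mem_specialOrthogonalGroup_iff.mpr ⟨hk, hone⟩) F
  · have hrot := mul_reflection_mem_specialOrthogonalGroup hk hneg
    calc ∫ θ in 0..2 * π, F (k *ᵥ circlePoint θ)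
        = ∫ θ in 0..2 * π, F (k *ᵥ circlePoint (-θ)) :=
          (integral_circlePoint_neg fun v => F (k *ᵥ v)).symm
      _ = ∫ θ in 0..2 * π, F ((k * !![1, 0; 0, -1]) *ᵥ circlePoint θ) := by
          simp only [← mulVec_mulVec, reflection_mulVec_circlePoint]
      _ = ∫ θ in 0..2 * π, F (circlePoint θ) :=
          integral_mulVec_circlePoint_of_mem_specialOrthogonalGroup hrot F

end OrthogonalInvariance

section Moments

theorem intervalIntegrable_cos_pow_mul_sin_pow (m n : ℕ) (a b : ℝ) :
    IntervalIntegrable (fun θ => cos θ ^ m * sin θ ^ n) MeasureTheory.volume a b :=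
  Continuous.intervalIntegrable (by fun_prop) a b

theorem circleMoment_zero_zero : circleMoment 0 0 = 2 * π := by
  simp [circleMoment]

theorem circleMoment_one_right (m : ℕ) : circleMoment m 1 = 0 := by
  simpa [circleMoment, mul_comm (cos _ ^ m)] using
    integral_sin_pow_odd_mul_cos_pow (a := 0) (b := 2 * π) 0 m

theorem circleMoment_add_two_add (m n : ℕ) :
    circleMoment (m + 2) n + circleMoment m (n + 2) = circleMoment m n := by
  rw [circleMoment, circleMoment,
    ← integral_add (intervalIntegrable_cos_pow_mul_sin_pow (m + 2) n 0 (2 * π))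
      (intervalIntegrable_cos_pow_mul_sin_pow m (n + 2) 0 (2 * π))]
  refine integral_congr fun θ _ => ?_
  linear_combination cos θ ^ m * sin θ ^ n * cos_sq_add_sin_sq θ

theorem mul_circleMoment_add_two_left_eq (m n : ℕ) :
    (n + 1) * circleMoment (m + 2) n = (m + 1) * circleMoment m (n + 2) := by
  have hderiv (θ : ℝ) : HasDerivAt (fun t => cos t ^ (m + 1) * sin t ^ (n + 1))
      ((n + 1) * (cos θ ^ (m + 2) * sin θ ^ n) -
        (m + 1) * (cos θ ^ m * sin θ ^ (n + 2))) θ := by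
    convert! ((hasDerivAt_cos θ).fun_pow (m + 1)).fun_mul
      ((hasDerivAt_sin θ).fun_pow (n + 1)) using 1
    simp only [Nat.cast_add, Nat.cast_one, Nat.add_sub_cancel]
    ring
  have hleft := (intervalIntegrable_cos_pow_mul_sin_pow (m + 2) n 0 (2 * π)).const_mul (n + 1 : ℝ)
  have hright := (intervalIntegrable_cos_pow_mul_sin_pow m (n + 2) 0 (2 * π)).const_mul (m + 1 : ℝ)
  have hint := integral_eq_sub_of_hasDerivAt (fun θ _ => hderiv θ) (hleft.sub hright)
  rw [integral_sub hleft hright, integral_const_mul, integral_const_mul] at hint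
  refine sub_eq_zero.mp (hint.trans ?_)
  simp

theorem circleMoment_add_two_left (m n : ℕ) :
    circleMoment (m + 2) n = (m + 1) / (m + n + 2) * circleMoment m n := by
  have hparts := mul_circleMoment_add_two_left_eq m n
  have hsum := circleMoment_add_two_add m n
  field_simp
  linear_combination hparts + (m + 1) * hsum

theorem circleMoment_add_two_right (m n : ℕ) :
    circleMoment m (n + 2) = (n + 1) / (m + n + 2) * circleMoment m n := by
  have hparts := mul_circleMoment_add_two_left_eq m n
  have hsum := circleMoment_add_two_add m n
  field_simp
  linear_combination -hparts + (n + 1) * hsum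

end Moments

theorem integral_sq_binaryCubic_circlePoint_eq_circleMoment (a b c d : ℝ) :
    ∫ θ in 0..2 * π, binaryCubic a b c d (circlePoint θ) ^ 2 =
      a ^ 2 * circleMoment 6 0 + 2 * a * b * circleMoment 5 1
        + (b ^ 2 + 2 * a * c) * circleMoment 4 2 + 2 * (a * d + b * c) * circleMoment 3 3
        + (c ^ 2 + 2 * b * d) * circleMoment 2 4 + 2 * c * d * circleMoment 1 5
        + d ^ 2 * circleMoment 0 6 := by
  simp only [circleMoment, ← integral_const_mul]
  repeat rw [← integral_add (Continuous.intervalIntegrable (by fun_prop) _ _)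
    (Continuous.intervalIntegrable (by fun_prop) _ _)]
  refine integral_congr fun θ _ => ?_
  simp only [binaryCubic, circlePoint, cons_val_zero, cons_val_one]
  ring

theorem integral_sq_binaryCubic_circlePoint (a b c d : ℝ) :
    ∫ θ in 0..2 * π, binaryCubic a b c d (circlePoint θ) ^ 2 =
      π / 8 * (5 * a ^ 2 + b ^ 2 + c ^ 2 + 5 * d ^ 2 + 2 * a * c + 2 * b * d) := by
  rw [integral_sq_binaryCubic_circlePoint_eq_circleMoment]
  simp only [circleMoment_add_two_left, circleMoment_add_two_right, circleMoment_zero_zero,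
    circleMoment_one_right]
  push_cast
  ring

/-- For every orthogonal matrix `k ∈ O₂(ℝ)` and every real binary cubic
form `f`, we have `q(k·f) = q(f)`, where `(k·f)(v) = det(k)⁻¹ · f(kᵀ v)` and
`q(aX³+bX²Y+cXY²+dY³) = 5a²+b²+c²+5d²+2ac+2bd`. The cubic form `k·f`, with coefficients
`(a', b', c', d')`, is specified by the defining rule as a function on `ℝ²`. -/
theorem stmt7 (k : Matrix (Fin 2) (Fin 2) ℝ) (hk : kᵀ * k = 1)
    (a b c d a' b' c' d' : ℝ)
    (hact : ∀ x y : ℝ,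
      a'*x^3 + b'*x^2*y + c'*x*y^2 + d'*y^3 =
        (k.det)⁻¹ * (a*(k 0 0*x + k 1 0*y)^3 + b*(k 0 0*x + k 1 0*y)^2*(k 0 1*x + k 1 1*y)
          + c*(k 0 0*x + k 1 0*y)*(k 0 1*x + k 1 1*y)^2 + d*(k 0 1*x + k 1 1*y)^3)) :
    5*a'^2 + b'^2 + c'^2 + 5*d'^2 + 2*a'*c' + 2*b'*d' =
      5*a^2 + b^2 + c^2 + 5*d^2 + 2*a*c + 2*b*d := by
  have hact' (v : Fin 2 → ℝ) :
      binaryCubic a' b' c' d' v = k.det⁻¹ * binaryCubic a b c d (kᵀ *ᵥ v) := by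
    simpa [binaryCubic, mulVec_eq_sum, Fin.sum_univ_two, mul_comm] using hact (v 0) (v 1)
  have hk' : kᵀ ∈ orthogonalGroup (Fin 2) ℝ := by
    rwa [mem_orthogonalGroup_iff, transpose_transpose]
  have hdet : k.det⁻¹ ^ 2 = 1 := by
    rw [inv_pow, ← det_transpose, det_sq_of_mem_orthogonalGroup hk', inv_one]
  have hint : ∫ θ in 0..2 * π, binaryCubic a' b' c' d' (circlePoint θ) ^ 2 =
      ∫ θ in 0..2 * π, binaryCubic a b c d (circlePoint θ) ^ 2 := by
    simp only [hact', mul_pow, hdet, one_mul]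
    exact integral_mulVec_circlePoint hk' fun v => binaryCubic a b c d v ^ 2
  rw [integral_sq_binaryCubic_circlePoint, integral_sq_binaryCubic_circlePoint] at hint
  exact mul_left_cancel₀ (by positivity) hint
end

section
/- On the set of binary cubic forms f = aX³ + bX²Y + cXY² + dY³ with real coefficients satisfying q(f) ≤ 1 (where q(f) = 5a² + b² + c² + 5d² + 2ac + 2bd), the maximum value 1/2 of |a| is attained exactly at the two forms f = ±(1/2)(X³ − XY²), and the maximum value √5/2 of |b| is attained exactly at the two forms f = ±(√5/2)(X²Y − (1/5)Y³). -/
/-!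
Pairing `a` with `c` and `b` with `d`, one completes the squares in `q` around `a` or around `b`:

  `q = 4a² + ((a + c)² + (b + d)² + 4d²)` and
  `5q = 4b² + ((b + 5d)² + 5(a + c)² + 20a²)`.

So `q ≤ 1` gives `a² ≤ 1/4` and `b² ≤ 5/4`, and equality forces the remaining squares to vanish,
leaving only the sign of `a` (respectively `b`) free.
-/

section CommSemiring

variable {R : Type*} [CommSemiring R]

/-- The quadratic form `q` on binary cubic forms, as a function of the coefficients `a, b, c, d` of
`aX³ + bX²Y + cXY² + dY³`; its unit ball is the set on which `|a|` and `|b|` are maximized. -/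
def cubicQ (a b c d : R) : R :=
  5 * a ^ 2 + b ^ 2 + c ^ 2 + 5 * d ^ 2 + 2 * a * c + 2 * b * d

theorem cubicQ_eq_four_mul_sq_fst_add (a b c d : R) :
    cubicQ a b c d = 4 * a ^ 2 + ((a + c) ^ 2 + (b + d) ^ 2 + 4 * d ^ 2) := by
  unfold cubicQ
  ring

theorem five_mul_cubicQ_eq_four_mul_sq_snd_add (a b c d : R) :
    5 * cubicQ a b c d =
      4 * b ^ 2 + ((b + 5 * d) ^ 2 + 5 * (a + c) ^ 2 + 20 * a ^ 2) := by
  unfold cubicQ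
  ring

end CommSemiring

section CommRing

variable {R : Type*} [CommRing R] [LinearOrder R] [IsStrictOrderedRing R]

theorem four_mul_sq_fst_le_cubicQ (a b c d : R) : 4 * a ^ 2 ≤ cubicQ a b c d := by
  rw [cubicQ_eq_four_mul_sq_fst_add]
  exact le_add_of_nonneg_right (by positivity)

theorem four_mul_sq_snd_le_five_mul_cubicQ (a b c d : R) :
    4 * b ^ 2 ≤ 5 * cubicQ a b c d := by
  rw [five_mul_cubicQ_eq_four_mul_sq_snd_add]
  exact le_add_of_nonneg_right (by positivity)

theorem cubicQ_eq_four_mul_sq_fst_iff {a b c d : R} :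
    cubicQ a b c d = 4 * a ^ 2 ↔ b = 0 ∧ c = -a ∧ d = 0 := by
  rw [cubicQ_eq_four_mul_sq_fst_add, add_eq_left,
    add_eq_zero_iff_of_nonneg (by positivity) (by positivity),
    add_eq_zero_iff_of_nonneg (by positivity) (by positivity)]
  simp only [mul_eq_zero, OfNat.ofNat_ne_zero, false_or, sq_eq_zero_iff]
  grind

theorem five_mul_cubicQ_eq_four_mul_sq_snd_iff {a b c d : R} :
    5 * cubicQ a b c d = 4 * b ^ 2 ↔ a = 0 ∧ c = 0 ∧ b = -(5 * d) := by
  rw [five_mul_cubicQ_eq_four_mul_sq_snd_add, add_eq_left,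
    add_eq_zero_iff_of_nonneg (by positivity) (by positivity),
    add_eq_zero_iff_of_nonneg (by positivity) (by positivity)]
  simp only [mul_eq_zero, OfNat.ofNat_ne_zero, false_or, sq_eq_zero_iff]
  grind

end CommRing

section Field

variable {K : Type*} [Field K] [LinearOrder K] [IsStrictOrderedRing K] {a b c d s : K}

theorem abs_fst_le_of_cubicQ_le_one (hq : cubicQ a b c d ≤ 1) : |a| ≤ 1 / 2 := by
  refine abs_le_of_sq_le_sq ?_ one_half_pos.le
  linarith [four_mul_sq_fst_le_cubicQ a b c d]

theorem abs_snd_le_of_cubicQ_le_one (hs : 0 ≤ s) (hs5 : s ^ 2 = 5) (hq : cubicQ a b c d ≤ 1) :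
    |b| ≤ s / 2 := by
  refine abs_le_of_sq_le_sq ?_ (div_nonneg hs zero_le_two)
  linarith [four_mul_sq_snd_le_five_mul_cubicQ a b c d]

theorem cubicQ_le_one_and_abs_fst_eq_iff :
    cubicQ a b c d ≤ 1 ∧ |a| = 1 / 2 ↔
      (a, b, c, d) = (1 / 2, 0, -(1 / 2), 0) ∨ (a, b, c, d) = (-(1 / 2), 0, 1 / 2, 0) := by
  simp only [Prod.mk.injEq]
  constructor
  · rintro ⟨hq, ha⟩
    have ha_sq : 4 * a ^ 2 = 1 := by
      rw [← sq_abs, ha]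
      norm_num
    have hq_eq : cubicQ a b c d = 4 * a ^ 2 :=
      le_antisymm (hq.trans_eq ha_sq.symm) (four_mul_sq_fst_le_cubicQ a b c d)
    obtain ⟨rfl, rfl, rfl⟩ := cubicQ_eq_four_mul_sq_fst_iff.1 hq_eq
    rcases eq_or_eq_neg_of_abs_eq ha with rfl | rfl <;> simp
  · rintro (⟨rfl, rfl, rfl, rfl⟩ | ⟨rfl, rfl, rfl, rfl⟩) <;> norm_num [cubicQ]

theorem cubicQ_le_one_and_abs_snd_eq_iff (hs : 0 ≤ s) (hs5 : s ^ 2 = 5) :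
    cubicQ a b c d ≤ 1 ∧ |b| = s / 2 ↔
      (a, b, c, d) = (0, s / 2, 0, -(s / 2) * (1 / 5)) ∨
        (a, b, c, d) = (0, -(s / 2), 0, s / 2 * (1 / 5)) := by
  simp only [Prod.mk.injEq]
  constructor
  · rintro ⟨hq, hb⟩
    have hb_sq : 4 * b ^ 2 = 5 := by
      rw [← sq_abs, hb]
      linarith
    have hq_eq : 5 * cubicQ a b c d = 4 * b ^ 2 :=
      le_antisymm (by linarith) (four_mul_sq_snd_le_five_mul_cubicQ a b c d)
    obtain ⟨rfl, rfl, hbd⟩ := five_mul_cubicQ_eq_four_mul_sq_snd_iff.1 hq_eq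
    rcases eq_or_eq_neg_of_abs_eq hb with rfl | rfl
    · exact Or.inl ⟨rfl, rfl, rfl, by linarith⟩
    · exact Or.inr ⟨rfl, rfl, rfl, by linarith⟩
  · have hs_half : |s / 2| = s / 2 := abs_of_nonneg (div_nonneg hs zero_le_two)
    rintro (⟨rfl, rfl, rfl, rfl⟩ | ⟨rfl, rfl, rfl, rfl⟩)
    · exact ⟨by unfold cubicQ; linarith, hs_half⟩
    · exact ⟨by unfold cubicQ; linarith, (abs_neg _).trans hs_half⟩

end Field

theorem stmt9_general {K : Type*} [Field K] [LinearOrder K] [IsStrictOrderedRing K] {s : K}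
    (hs : 0 ≤ s) (hs5 : s ^ 2 = 5) :
    (∀ a b c d : K, cubicQ a b c d ≤ 1 → |a| ≤ 1 / 2) ∧
    (∀ a b c d : K, cubicQ a b c d ≤ 1 ∧ |a| = 1 / 2 ↔
      (a, b, c, d) = (1 / 2, 0, -(1 / 2), 0) ∨ (a, b, c, d) = (-(1 / 2), 0, 1 / 2, 0)) ∧
    (∀ a b c d : K, cubicQ a b c d ≤ 1 → |b| ≤ s / 2) ∧
    (∀ a b c d : K, cubicQ a b c d ≤ 1 ∧ |b| = s / 2 ↔
      (a, b, c, d) = (0, s / 2, 0, -(s / 2) * (1 / 5)) ∨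
        (a, b, c, d) = (0, -(s / 2), 0, s / 2 * (1 / 5))) :=
  ⟨fun _ _ _ _ => abs_fst_le_of_cubicQ_le_one,
    fun _ _ _ _ => cubicQ_le_one_and_abs_fst_eq_iff,
    fun _ _ _ _ => abs_snd_le_of_cubicQ_le_one hs hs5,
    fun _ _ _ _ => cubicQ_le_one_and_abs_snd_eq_iff hs hs5⟩

/-- On the set of real binary cubic forms `f = aX³ + bX²Y + cXY² + dY³`
with `q(f) ≤ 1`, the maximum value `1/2` of `|a|` is attained exactly at
`f = ±(1/2)(X³ − XY²)`, and the maximum value `√5/2` of `|b|` is attained exactly at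
`f = ±(√5/2)(X²Y − (1/5)Y³)`. -/
theorem stmt9 :
    (∀ a b c d : ℝ, 5*a^2 + b^2 + c^2 + 5*d^2 + 2*a*c + 2*b*d ≤ 1 → |a| ≤ 1/2) ∧
    (∀ a b c d : ℝ, 5*a^2 + b^2 + c^2 + 5*d^2 + 2*a*c + 2*b*d ≤ 1 →
      (|a| = 1/2 ↔
        (a, b, c, d) = (1/2, 0, -(1/2), 0) ∨ (a, b, c, d) = (-(1/2), 0, 1/2, 0))) ∧
    (∀ a b c d : ℝ, 5*a^2 + b^2 + c^2 + 5*d^2 + 2*a*c + 2*b*d ≤ 1 →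
      |b| ≤ Real.sqrt 5 / 2) ∧
    (∀ a b c d : ℝ, 5*a^2 + b^2 + c^2 + 5*d^2 + 2*a*c + 2*b*d ≤ 1 →
      (|b| = Real.sqrt 5 / 2 ↔
        (a, b, c, d) = (0, Real.sqrt 5 / 2, 0, -(Real.sqrt 5 / 2) * (1/5)) ∨
        (a, b, c, d) = (0, -(Real.sqrt 5 / 2), 0, Real.sqrt 5 / 2 * (1/5)))) := by
  obtain ⟨ha, ha_eq, hb, hb_eq⟩ := stmt9_general (Real.sqrt_nonneg 5) (Real.sq_sqrt (by simp))
  exact ⟨ha, fun a b c d hq => (and_iff_right hq).symm.trans (ha_eq a b c d),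
    hb, fun a b c d hq => (and_iff_right hq).symm.trans (hb_eq a b c d)⟩
end

section
/- Let M ∈ GL_2(ℝ) satisfy det(M) = ±1, and let f = aX³ + bX²Y + cXY² + dY³ be a binary cubic form with real coefficients. Then disc(M·f) = disc(f), where M·f is the binary cubic form defined by (M·f)(v) = det(M)^{-1} · f(Mᵀ v) for v ∈ ℝ², and where disc(aX³ + bX²Y + cXY² + dY³) = 18abcd + b²c² − 4ac³ − 4b³d − 27a²d². -/
/-!
Over an algebraic closure a binary cubic form is a product of three linear forms, and its
discriminant is the product of the squares of their three pairwise determinants. A linear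
substitution `M` multiplies each of these determinants by `det M`, hence the discriminant by
`(det M) ^ 6`; scaling the form by `u` multiplies it by `u ^ 4`. For `u = (det M)⁻¹` the total
factor is `(det M) ^ 2`.

The coefficients of a form can be recovered from its values at `(1, 0)`, `(0, 1)`, `(1, 1)` and
`(1, t)`, four distinct points of the projective line when `t ≠ 0, 1`.
-/

open Matrix

section BinaryCubicForm

variable {R : Type*} [CommRing R]

/-- The binary cubic form `a X³ + b X² Y + c X Y² + d Y³` as a function on `R²`. Its coefficients
are stored in a `Cubic R`, so that its discriminant is `Cubic.discr`. -/
def binaryCubicForm (f : Cubic R) (v : Fin 2 → R) : R :=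
  f.a * v 0 ^ 3 + f.b * v 0 ^ 2 * v 1 + f.c * v 0 * v 1 ^ 2 + f.d * v 1 ^ 3

namespace binaryCubicForm

/-- The scalar multiple `u f` of a binary cubic form, in terms of coefficients. -/
def scale (u : R) (f : Cubic R) : Cubic R :=
  ⟨u * f.a, u * f.b, u * f.c, u * f.d⟩

/-- The binary cubic form `v ↦ f (Mᵀ v)`, in terms of coefficients: the action of `M` on binary
cubic forms without its factor `(det M)⁻¹`. -/
def subst (M : Matrix (Fin 2) (Fin 2) R) (f : Cubic R) : Cubic R where
  a := f.a * M 0 0 ^ 3 + f.b * M 0 0 ^ 2 * M 0 1 + f.c * M 0 0 * M 0 1 ^ 2 + f.d * M 0 1 ^ 3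
  b := 3 * f.a * M 0 0 ^ 2 * M 1 0 + f.b * (M 0 0 ^ 2 * M 1 1 + 2 * M 0 0 * M 0 1 * M 1 0)
    + f.c * (2 * M 0 0 * M 0 1 * M 1 1 + M 0 1 ^ 2 * M 1 0) + 3 * f.d * M 0 1 ^ 2 * M 1 1
  c := 3 * f.a * M 0 0 * M 1 0 ^ 2 + f.b * (2 * M 0 0 * M 1 0 * M 1 1 + M 0 1 * M 1 0 ^ 2)
    + f.c * (M 0 0 * M 1 1 ^ 2 + 2 * M 0 1 * M 1 0 * M 1 1) + 3 * f.d * M 0 1 * M 1 1 ^ 2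
  d := f.a * M 1 0 ^ 3 + f.b * M 1 0 ^ 2 * M 1 1 + f.c * M 1 0 * M 1 1 ^ 2 + f.d * M 1 1 ^ 3

theorem apply_scale (u : R) (f : Cubic R) (v : Fin 2 → R) :
    binaryCubicForm (scale u f) v = u * binaryCubicForm f v := by
  simp only [binaryCubicForm, scale]
  ring

theorem apply_subst (M : Matrix (Fin 2) (Fin 2) R) (f : Cubic R) (v : Fin 2 → R) :
    binaryCubicForm (subst M f) v = binaryCubicForm f (Mᵀ *ᵥ v) := by
  simp only [binaryCubicForm, subst, mulVec_eq_sum, Fin.sum_univ_two, Pi.add_apply, Pi.smul_apply,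
    transpose_transpose, MulOpposite.smul_eq_mul_unop, MulOpposite.unop_op]
  ring

theorem discr_scale (u : R) (f : Cubic R) : (scale u f).discr = u ^ 4 * f.discr := by
  simp only [Cubic.discr, scale]
  ring

theorem discr_subst (M : Matrix (Fin 2) (Fin 2) R) (f : Cubic R) :
    (subst M f).discr = M.det ^ 6 * f.discr := by
  simp only [Cubic.discr, subst, det_fin_two]
  ring

theorem injective {t : R} (ht : IsLeftRegular (t * (t - 1))) :
    Function.Injective (binaryCubicForm : Cubic R → (Fin 2 → R) → R) := by
  intro f g hfg
  have eval_eq (x y : R) : f.a * x ^ 3 + f.b * x ^ 2 * y + f.c * x * y ^ 2 + f.d * y ^ 3 =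
      g.a * x ^ 3 + g.b * x ^ 2 * y + g.c * x * y ^ 2 + g.d * y ^ 3 :=
    congrFun hfg ![x, y]
  have ha : f.a = g.a := by linear_combination eval_eq 1 0
  have hd : f.d = g.d := by linear_combination eval_eq 0 1
  have hbc : f.b + f.c = g.b + g.c := by linear_combination eval_eq 1 1 - ha - hd
  have hc : f.c = g.c := ht <| by
    linear_combination eval_eq 1 t - ha - t ^ 3 * hd - t * hbc
  have hb : f.b = g.b := by linear_combination hbc - hc
  exact Cubic.ext ha hb hc hd

end binaryCubicForm

end BinaryCubicForm

open binaryCubicForm in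
theorem stmt10_general {R : Type*} [CommRing R] {t : R} (ht : IsLeftRegular (t * (t - 1)))
    (M : Matrix (Fin 2) (Fin 2) R) (u : R) (f g : Cubic R)
    (hact : ∀ v, binaryCubicForm g v = u * binaryCubicForm f (Mᵀ *ᵥ v)) :
    g.discr = u ^ 4 * M.det ^ 6 * f.discr := by
  have hg : g = scale u (subst M f) := injective ht <| funext fun v => by
    rw [hact, apply_scale, apply_subst]
  rw [hg, discr_scale, discr_subst, mul_assoc]

/-- Let `M ∈ GL₂(ℝ)` with `det M = ±1` and let `f = aX³+bX²Y+cXY²+dY³`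
be a real binary cubic form. Then `disc(M·f) = disc(f)`, where
`(M·f)(v) = det(M)⁻¹ · f(Mᵀ v)` and `disc = 18abcd + b²c² − 4ac³ − 4b³d − 27a²d²`.
The cubic form `M·f`, with coefficients `(a', b', c', d')`, is specified by the defining
rule as a function on `ℝ²`. -/
theorem stmt10 (M : Matrix (Fin 2) (Fin 2) ℝ) (hM : M.det = 1 ∨ M.det = -1)
    (a b c d a' b' c' d' : ℝ)
    (hact : ∀ x y : ℝ,
      a'*x^3 + b'*x^2*y + c'*x*y^2 + d'*y^3 =
        (M.det)⁻¹ * (a*(M 0 0*x + M 1 0*y)^3 + b*(M 0 0*x + M 1 0*y)^2*(M 0 1*x + M 1 1*y)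
          + c*(M 0 0*x + M 1 0*y)*(M 0 1*x + M 1 1*y)^2 + d*(M 0 1*x + M 1 1*y)^3)) :
    18*a'*b'*c'*d' + b'^2*c'^2 - 4*a'*c'^3 - 4*b'^3*d' - 27*a'^2*d'^2 =
      18*a*b*c*d + b^2*c^2 - 4*a*c^3 - 4*b^3*d - 27*a^2*d^2 := by
  have hdiscr := stmt10_general (t := -1) (IsRegular.of_ne_zero (by norm_num)).left M M.det⁻¹
    ⟨a, b, c, d⟩ ⟨a', b', c', d'⟩ fun v => by
      simpa [binaryCubicForm, mulVec, dotProduct] using hact (v 0) (v 1)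
  rcases hM with h | h <;> simp only [Cubic.discr, h] at hdiscr <;> linear_combination hdiscr
end

section
/- Let p = aX³ + bX² + cX + d be a polynomial with real coefficients, a ≠ 0, whose discriminant Δ = 18abcd + b²c² − 4ac³ − 4b³d − 27a²d² is nonzero. Then: p has three distinct real roots if and only if Δ > 0, and p has exactly one real root if and only if Δ < 0. -/
/-!
Let `r` be a root of the cubic `p` and write `p = (X - r) q`. Then `Δ = disc(q) p'(r)²`, so over any
field of characteristic other than two, if `Δ ≠ 0`, the discriminant of `q` is a nonzero square
exactly when `Δ` is. In that case `q` has two distinct roots, neither of them `r`; otherwise `q` has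
no root at all. In a real closed field `p` has a root because its degree is odd, and being a square
means being nonnegative.
-/

open Polynomial Filter

section QuadraticFactor

variable {R : Type*} [CommRing R] {P : Cubic R} {r x y : R}

theorem isRoot_toPoly_iff : P.toPoly.IsRoot x ↔ P.a * x ^ 3 + P.b * x ^ 2 + P.c * x + P.d = 0 := by
  simp [Cubic.toPoly]

theorem eval_toPoly_eq_sub_mul_quadratic (hr : P.toPoly.IsRoot r) (x : R) :
    P.toPoly.eval x =
      (x - r) * (P.a * (x * x) + (P.a * r + P.b) * x + ((P.a * r + P.b) * r + P.c)) := by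
  rw [isRoot_toPoly_iff] at hr
  simp only [Cubic.toPoly, eval_add, eval_mul, eval_C, eval_pow, eval_X]
  linear_combination hr

theorem discr_eq_discrim_mul_sq (hr : P.toPoly.IsRoot r) :
    P.discr = discrim P.a (P.a * r + P.b) ((P.a * r + P.b) * r + P.c) *
      (3 * P.a * r ^ 2 + 2 * P.b * r + P.c) ^ 2 := by
  have hd : P.d = -(P.a * r ^ 3 + P.b * r ^ 2 + P.c * r) := by
    linear_combination isRoot_toPoly_iff.mp hr
  rw [Cubic.discr, discrim, hd]
  ring

theorem isSquare_discr_of_isRoot_of_ne [NoZeroDivisors R] (hx : P.toPoly.IsRoot x)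
    (hy : P.toPoly.IsRoot y) (hxy : x ≠ y) : IsSquare P.discr := by
  have hquad : P.a * (y * y) + (P.a * x + P.b) * y + ((P.a * x + P.b) * x + P.c) = 0 := by
    have hmul := (eval_toPoly_eq_sub_mul_quadratic hx y).symm.trans hy
    exact (mul_eq_zero.mp hmul).resolve_left (sub_ne_zero.mpr hxy.symm)
  rw [discr_eq_discrim_mul_sq hx, discrim_eq_sq_of_quadratic_eq_zero hquad]
  exact (IsSquare.sq _).mul (IsSquare.sq _)

end QuadraticFactor

section Field

variable {K : Type*} [Field K] [NeZero (2 : K)] {P : Cubic K}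

theorem exists_ne_quadratic_eq_zero {a b c : K} (ha : a ≠ 0) (hsq : IsSquare (discrim a b c))
    (hne : discrim a b c ≠ 0) :
    ∃ x y : K, x ≠ y ∧ a * (x * x) + b * x + c = 0 ∧ a * (y * y) + b * y + c = 0 := by
  obtain ⟨s, hs⟩ := hsq
  have hs₀ : s ≠ 0 := by
    rintro rfl
    exact hne (by rw [hs, mul_zero])
  refine ⟨(-b + s) / (2 * a), (-b - s) / (2 * a), fun heq ↦ ?_,
    (quadratic_eq_zero_iff ha hs _).mpr (.inl rfl), (quadratic_eq_zero_iff ha hs _).mpr (.inr rfl)⟩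
  rw [div_left_inj' (mul_ne_zero two_ne_zero ha)] at heq
  have htwo : 2 * s = 0 := by linear_combination heq
  exact hs₀ ((mul_eq_zero.mp htwo).resolve_left two_ne_zero)

theorem exists_three_roots_of_isSquare_discr (ha : P.a ≠ 0) (hroot : ∃ r, P.toPoly.IsRoot r)
    (hne : P.discr ≠ 0) (hsq : IsSquare P.discr) :
    ∃ x y z : K, x ≠ y ∧ x ≠ z ∧ y ≠ z ∧
      P.toPoly.IsRoot x ∧ P.toPoly.IsRoot y ∧ P.toPoly.IsRoot z := by
  obtain ⟨r, hr⟩ := hroot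
  rw [discr_eq_discrim_mul_sq hr] at hne hsq
  have hderiv : 3 * P.a * r ^ 2 + 2 * P.b * r + P.c ≠ 0 := by
    intro hzero
    exact hne (by rw [hzero, zero_pow two_ne_zero, mul_zero])
  have hdiscrim : IsSquare (discrim P.a (P.a * r + P.b) ((P.a * r + P.b) * r + P.c)) := by
    rw [← mul_div_cancel_right₀ (discrim _ _ _) (pow_ne_zero 2 hderiv)]
    exact hsq.div (IsSquare.sq _)
  have hquad {x : K}
      (hx : P.a * (x * x) + (P.a * r + P.b) * x + ((P.a * r + P.b) * r + P.c) = 0) :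
      r ≠ x ∧ P.toPoly.IsRoot x := by
    refine ⟨?_, by rw [IsRoot.def, eval_toPoly_eq_sub_mul_quadratic hr, hx, mul_zero]⟩
    rintro rfl
    exact hderiv (by linear_combination hx)
  obtain ⟨y, z, hyz, hy, hz⟩ :=
    exists_ne_quadratic_eq_zero ha hdiscrim (left_ne_zero_of_mul hne)
  exact ⟨r, y, z, (hquad hy).1, (hquad hz).1, hyz, hr, (hquad hy).2, (hquad hz).2⟩

theorem exists_three_roots_iff_isSquare_discr (ha : P.a ≠ 0) (hroot : ∃ r, P.toPoly.IsRoot r)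
    (hne : P.discr ≠ 0) :
    (∃ x y z : K, x ≠ y ∧ x ≠ z ∧ y ≠ z ∧
      P.toPoly.IsRoot x ∧ P.toPoly.IsRoot y ∧ P.toPoly.IsRoot z) ↔ IsSquare P.discr :=
  ⟨fun ⟨_, _, _, hxy, _, _, hx, hy, _⟩ ↦ isSquare_discr_of_isRoot_of_ne hx hy hxy,
    exists_three_roots_of_isSquare_discr ha hroot hne⟩

theorem existsUnique_root_iff_not_isSquare_discr (ha : P.a ≠ 0) (hroot : ∃ r, P.toPoly.IsRoot r)
    (hne : P.discr ≠ 0) : (∃! x, P.toPoly.IsRoot x) ↔ ¬IsSquare P.discr := by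
  refine ⟨fun hunique hsq ↦ ?_, fun hsq ↦ ?_⟩
  · obtain ⟨x, y, _, hxy, _, _, hx, hy, _⟩ :=
      exists_three_roots_of_isSquare_discr ha hroot hne hsq
    exact hxy (hunique.unique hx hy)
  · obtain ⟨r, hr⟩ := hroot
    refine ⟨r, hr, fun x hx ↦ ?_⟩
    by_contra hxr
    exact hsq (isSquare_discr_of_isRoot_of_ne hx hr hxr)

end Field

theorem surjective_eval_of_odd_natDegree_of_leadingCoeff_nonneg {f : ℝ[X]} (hf : Odd f.natDegree)
    (hlead : 0 ≤ f.leadingCoeff) : Function.Surjective fun x ↦ f.eval x := by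
  have hdeg : 0 < f.degree := natDegree_pos_iff_degree_pos.mp hf.pos
  have hcomp_deg : 0 < (f.comp (-X)).degree := by
    rw [← natDegree_pos_iff_degree_pos, natDegree_comp, natDegree_neg, natDegree_X, mul_one]
    exact hf.pos
  have hcomp_lead : (f.comp (-X)).leadingCoeff ≤ 0 := by
    rw [leadingCoeff_comp (by simp), leadingCoeff_neg, leadingCoeff_X, hf.neg_one_pow]
    linarith
  have hatBot : Tendsto (fun x ↦ f.eval x) atBot atBot := by
    have hneg := (tendsto_atBot_of_leadingCoeff_nonpos _ hcomp_deg hcomp_lead).comp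
      tendsto_neg_atBot_atTop
    simpa [Function.comp_def] using hneg
  exact f.continuous.surjective (tendsto_atTop_of_leadingCoeff_nonneg f hdeg hlead) hatBot

theorem exists_isRoot_of_odd_natDegree_real {f : ℝ[X]} (hf : Odd f.natDegree) :
    ∃ x, f.IsRoot x := by
  rcases le_total 0 f.leadingCoeff with hlead | hlead
  · exact surjective_eval_of_odd_natDegree_of_leadingCoeff_nonneg hf hlead 0
  · obtain ⟨x, hx⟩ := surjective_eval_of_odd_natDegree_of_leadingCoeff_nonneg (f := -f)
      (by rwa [natDegree_neg]) (by rwa [leadingCoeff_neg, neg_nonneg]) 0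
    exact ⟨x, by simpa using hx⟩

instance instIsRealClosedReal : IsRealClosed ℝ :=
  .of_linearOrderedField (fun hx ↦ ⟨_, (Real.mul_self_sqrt hx).symm⟩)
    exists_isRoot_of_odd_natDegree_real

theorem exists_isRoot_toPoly_of_isRealClosed {K : Type*} [Field K] [IsRealClosed K] {P : Cubic K}
    (ha : P.a ≠ 0) : ∃ r, P.toPoly.IsRoot r :=
  IsRealClosed.exists_isRoot_of_odd_natDegree
    (by rw [Cubic.natDegree_of_a_ne_zero ha]; decide)

theorem stmt12_general {K : Type*} [Field K] [LinearOrder K] [IsStrictOrderedRing K]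
    [IsRealClosed K] (a b c d : K) (ha : a ≠ 0)
    (hΔ : 18 * a * b * c * d + b ^ 2 * c ^ 2 - 4 * a * c ^ 3 - 4 * b ^ 3 * d
      - 27 * a ^ 2 * d ^ 2 ≠ 0) :
    ((∃ x y z : K, x ≠ y ∧ x ≠ z ∧ y ≠ z ∧
        a * x ^ 3 + b * x ^ 2 + c * x + d = 0 ∧
        a * y ^ 3 + b * y ^ 2 + c * y + d = 0 ∧
        a * z ^ 3 + b * z ^ 2 + c * z + d = 0) ↔
      0 < 18 * a * b * c * d + b ^ 2 * c ^ 2 - 4 * a * c ^ 3 - 4 * b ^ 3 * d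
        - 27 * a ^ 2 * d ^ 2) ∧
    ((∃! x : K, a * x ^ 3 + b * x ^ 2 + c * x + d = 0) ↔
      18 * a * b * c * d + b ^ 2 * c ^ 2 - 4 * a * c ^ 3 - 4 * b ^ 3 * d
        - 27 * a ^ 2 * d ^ 2 < 0) := by
  let P : Cubic K := ⟨a, b, c, d⟩
  have hdiscr :
      18 * a * b * c * d + b ^ 2 * c ^ 2 - 4 * a * c ^ 3 - 4 * b ^ 3 * d
        - 27 * a ^ 2 * d ^ 2 = P.discr := by
    rw [Cubic.discr]
    ring
  rw [hdiscr] at hΔ ⊢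
  have hroot : ∃ r, P.toPoly.IsRoot r := exists_isRoot_toPoly_of_isRealClosed ha
  have hthree := exists_three_roots_iff_isSquare_discr ha hroot hΔ
  have hunique := existsUnique_root_iff_not_isSquare_discr ha hroot hΔ
  simp only [isRoot_toPoly_iff, ← IsRealClosed.nonneg_iff_isSquare, not_le] at hthree hunique
  exact ⟨hthree.trans hΔ.symm.le_iff_lt, hunique⟩

/-- Let `p = aX³ + bX² + cX + d` be a real cubic polynomial with
`a ≠ 0` and nonzero discriminant `Δ = 18abcd + b²c² − 4ac³ − 4b³d − 27a²d²`. Then `p` has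
three distinct real roots iff `Δ > 0`, and exactly one real root iff `Δ < 0`. -/
theorem stmt12 (a b c d : ℝ) (ha : a ≠ 0)
    (hΔ : 18*a*b*c*d + b^2*c^2 - 4*a*c^3 - 4*b^3*d - 27*a^2*d^2 ≠ 0) :
    ((∃ x y z : ℝ, x ≠ y ∧ x ≠ z ∧ y ≠ z ∧
        a*x^3 + b*x^2 + c*x + d = 0 ∧
        a*y^3 + b*y^2 + c*y + d = 0 ∧
        a*z^3 + b*z^2 + c*z + d = 0) ↔
      0 < 18*a*b*c*d + b^2*c^2 - 4*a*c^3 - 4*b^3*d - 27*a^2*d^2) ∧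
    ((∃! x : ℝ, a*x^3 + b*x^2 + c*x + d = 0) ↔
      18*a*b*c*d + b^2*c^2 - 4*a*c^3 - 4*b^3*d - 27*a^2*d^2 < 0) :=
  stmt12_general a b c d ha hΔ
end

section
/- For every 2×2 real matrix g with det(g) = ±1 there exist a matrix h ∈ GL_2(ℤ) (an integer matrix with determinant ±1), real numbers t, s, and k ∈ O_2(ℝ) such that h g = n(t) a(s) k, with |t| ≤ 1/2 and s ≥ (1 − t²)^{1/4}. In other words, every left GL_2(ℤ)-orbit in SL_2^±(ℝ) meets the Gauss set F' = {n(t) a(s) k : |t| ≤ 1/2, s ≥ (1 − t²)^{1/4}, k ∈ O_2(ℝ)}. -/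
open Matrix

/-!
`GL₂(ℝ)` acts on the upper half-plane, and among the matrices of determinant `±1` those fixing `I`
are orthogonal. Hence `g • I` determines such a `g` up to right multiplication by `O₂(ℝ)`. Now
`n(t) a(s) • I = S⁻¹ • z = -1 / z` for `z = -t + i s²`, and `1 ≤ |z|²` reads `1 - t² ≤ s⁴`, so the
conditions on `t, s` in the Gauss set say that `z` lies in the standard fundamental domain `𝒟` of
the modular group. If `γ ∈ SL₂(ℤ)` moves `g • I` into `𝒟`, then `h = S⁻¹ γ` moves `g` into the
Gauss set.
-/

open UpperHalfPlane Matrix.SpecialLinearGroup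
open ModularGroup (S)
open scoped MatrixGroups Modular

lemma re_smul_I (g : GL (Fin 2) ℝ) :
    (g • I).re = (g 0 0 * g 1 0 + g 0 1 * g 1 1) / (g 1 0 ^ 2 + g 1 1 ^ 2) := by
  rw [re_smul, Complex.div_re]
  simp only [num, denom, Complex.normSq_apply, coe_I, Complex.add_re, Complex.add_im,
    Complex.mul_re, Complex.mul_im, Complex.ofReal_re, Complex.ofReal_im, Complex.I_re,
    Complex.I_im]
  ring

lemma im_smul_I (g : GL (Fin 2) ℝ) :
    (g • I).im = |g.det.val| / (g 1 0 ^ 2 + g 1 1 ^ 2) := by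
  rw [im_smul_eq_div_normSq, I_im, mul_one]
  simp only [denom, Complex.normSq_apply, coe_I, Complex.add_re, Complex.add_im,
    Complex.mul_re, Complex.mul_im, Complex.ofReal_re, Complex.ofReal_im, Complex.I_re,
    Complex.I_im]
  ring

lemma mul_transpose_eq_of_smul_I_eq_I {k : GL (Fin 2) ℝ} (hk : k • I = I) :
    k.val * k.valᵀ = |k.det.val| • (1 : Matrix (Fin 2) (Fin 2) ℝ) := by
  have hdet : 0 < |k.det.val| := abs_pos.mpr k.det.ne_zero
  have norm_row_one : k 1 0 ^ 2 + k 1 1 ^ 2 = |k.det.val| := by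
    have him := im_smul_I k
    rw [hk, I_im] at him
    exact (eq_of_div_eq_one him.symm).symm
  have inner_rows : k 0 0 * k 1 0 + k 0 1 * k 1 1 = 0 := by
    have hre := re_smul_I k
    rw [hk, I_re, norm_row_one] at hre
    exact (div_eq_zero_iff.mp hre.symm).resolve_right hdet.ne'
  have norm_row_zero : k 0 0 ^ 2 + k 0 1 ^ 2 = |k.det.val| := by
    have lagrange : (k 0 0 ^ 2 + k 0 1 ^ 2) * (k 1 0 ^ 2 + k 1 1 ^ 2) =
        (k 0 0 * k 1 0 + k 0 1 * k 1 1) ^ 2 + |k.det.val| ^ 2 := by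
      rw [sq_abs, GeneralLinearGroup.val_det_apply, det_fin_two]
      ring
    rw [norm_row_one, inner_rows] at lagrange
    exact mul_right_cancel₀ hdet.ne' (by linarith)
  simp only [← Matrix.ext_iff, Fin.forall_fin_two, Matrix.mul_apply, transpose_apply,
    Fin.sum_univ_two, Matrix.smul_apply, one_apply_eq, one_apply_ne zero_ne_one,
    one_apply_ne one_ne_zero, smul_eq_mul, mul_one, mul_zero]
  refine ⟨⟨?_, ?_⟩, ?_, ?_⟩ <;> linarith

lemma mem_orthogonalGroup_of_smul_I_eq_I {k : GL (Fin 2) ℝ} (hdet : |k.det.val| = 1)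
    (hk : k • I = I) : k.val ∈ orthogonalGroup (Fin 2) ℝ := by
  rw [mem_orthogonalGroup_iff, mul_transpose_eq_of_smul_I_eq_I hk, hdet, one_smul]

lemma exists_eq_mul_orthogonal_of_smul_I_eq {g b : GL (Fin 2) ℝ} (hdet : |g.det.val| = |b.det.val|)
    (hgb : g • I = b • I) : ∃ k ∈ orthogonalGroup (Fin 2) ℝ, g.val = b.val * k := by
  refine ⟨(b⁻¹ * g).val, mem_orthogonalGroup_of_smul_I_eq_I ?_ ?_, ?_⟩
  · simp only [map_mul, map_inv, Units.val_mul, Units.val_inv_eq_inv_val, abs_mul, abs_inv, hdet]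
    exact inv_mul_cancel₀ (abs_pos.mpr b.det.ne_zero).ne'
  · rw [mul_smul, hgb, inv_smul_smul]
  · rw [← Units.val_mul, mul_inv_cancel_left]

lemma S_smul_I : S • I = I :=
  ModularGroup.stabilizer_I.mpr (by simp)

/-- The matrix `n(t) a(s)` with `z = -t + i s²`, a lower triangular section of `g ↦ S • g • I`. It
supplies the factors `n(t) a(s)` of Iwasawa decompositions, and is encoded as a conjugate of
the upper triangular `z.toSL2R`. -/
noncomputable def lowerIwasawa (z : ℍ) : GL (Fin 2) ℝ :=
  mapGL ℝ S⁻¹ * mapGL ℝ z.toSL2R * mapGL ℝ S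

lemma det_lowerIwasawa (z : ℍ) : (lowerIwasawa z).det = 1 := by
  simp [lowerIwasawa]

lemma val_lowerIwasawa (z : ℍ) :
    (lowerIwasawa z).val = !![1, 0; -z.re, 1] * !![(√z.im)⁻¹, 0; 0, √z.im] := by
  have val_S : (mapGL ℝ S).val = !![0, -1; 1, 0] := by
    ext i j
    fin_cases i <;> fin_cases j <;> simp [ModularGroup.coe_S]
  have val_inv_S : (mapGL ℝ S⁻¹).val = !![0, 1; -1, 0] := by
    rw [map_inv, coe_units_inv, val_S]
    exact inv_eq_right_inv (by simp [one_fin_two])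
  have val_toSL2R : (mapGL ℝ z.toSL2R).val = !![√z.im, z.re / √z.im; 0, 1 / √z.im] := rfl
  rw [lowerIwasawa, Units.val_mul, Units.val_mul, val_inv_S, val_toSL2R, val_S]
  simp [div_eq_mul_inv]

lemma lowerIwasawa_smul_I (z : ℍ) : lowerIwasawa z • I = S⁻¹ • z := by
  calc lowerIwasawa z • I
      = S⁻¹ • z.toSL2R • S • I := by
        rw [lowerIwasawa, mul_smul, mul_smul]
        rfl
    _ = S⁻¹ • z := by rw [S_smul_I, toSL2R_smul_I]

lemma one_sub_re_sq_rpow_le_sqrt_im {z : ℍ} (hre : |z.re| ≤ 1)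
    (hnorm : 1 ≤ Complex.normSq (z : ℂ)) : (1 - z.re ^ 2) ^ ((1 : ℝ) / 4) ≤ √z.im := by
  rw [Complex.normSq_apply, coe_re, coe_im] at hnorm
  have hre_sq : z.re ^ 2 ≤ 1 := (sq_le_one_iff_abs_le_one _).mpr hre
  calc (1 - z.re ^ 2) ^ ((1 : ℝ) / 4)
      ≤ (z.im ^ 2) ^ ((1 : ℝ) / 4) := by
        gcongr
        linarith
    _ = √z.im := by
        rw [Real.sqrt_eq_rpow, ← Real.rpow_natCast, ← Real.rpow_mul z.im_pos.le]
        norm_num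

/-- The Gauss set `F'`: matrices with an Iwasawa decomposition `n(t) a(s) k`, `n(t)` lower
triangular, whose parameters are reduced. It is the set that every orbit has to meet. -/
def gaussSet : Set (Matrix (Fin 2) (Fin 2) ℝ) :=
  {g | ∃ (t s : ℝ) (k : Matrix (Fin 2) (Fin 2) ℝ), |t| ≤ 1 / 2 ∧ (1 - t ^ 2) ^ ((1 : ℝ) / 4) ≤ s ∧
    kᵀ * k = 1 ∧ g = !![1, 0; t, 1] * !![s⁻¹, 0; 0, s] * k}

lemma mem_gaussSet_of_S_smul_smul_I_mem_fd {g : GL (Fin 2) ℝ} (hdet : |g.det.val| = 1)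
    (hg : S • g • I ∈ 𝒟) : g.val ∈ gaussSet := by
  set z := S • g • I with hz
  have hsmul : g • I = lowerIwasawa z • I := by
    rw [lowerIwasawa_smul_I, hz, inv_smul_smul]
  obtain ⟨k, hk, hgk⟩ := exists_eq_mul_orthogonal_of_smul_I_eq
    (by rw [hdet, det_lowerIwasawa, Units.val_one, abs_one]) hsmul
  rw [val_lowerIwasawa] at hgk
  obtain ⟨hnorm, hre⟩ := hg
  refine ⟨-z.re, √z.im, k, (abs_neg z.re).trans_le hre, ?_,
    (mem_orthogonalGroup_iff' _ _).mp hk, hgk⟩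
  rw [neg_sq]
  exact one_sub_re_sq_rpow_le_sqrt_im (hre.trans (by norm_num)) hnorm

/-- For every `2×2` real matrix `g` with `det g = ±1` there exist
`h ∈ GL₂(ℤ)` (an integer matrix of determinant `±1`), `t, s ∈ ℝ` and `k ∈ O₂(ℝ)` such
that `h g = n(t) a(s) k` with `|t| ≤ 1/2` and `s ≥ (1 − t²)^(1/4)`: every left
`GL₂(ℤ)`-orbit in `SL₂^±(ℝ)` meets the Gauss set. Here `n(t) = [[1,0],[t,1]]` and
`a(s) = diag(s⁻¹, s)`. -/
theorem stmt16 (g : Matrix (Fin 2) (Fin 2) ℝ) (hg : g.det = 1 ∨ g.det = -1) :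
    ∃ (h : Matrix (Fin 2) (Fin 2) ℤ) (t s : ℝ) (k : Matrix (Fin 2) (Fin 2) ℝ),
      (h.det = 1 ∨ h.det = -1) ∧ |t| ≤ 1/2 ∧ (1 - t^2) ^ ((1 : ℝ)/4) ≤ s ∧
      kᵀ * k = 1 ∧
      (h.map (Int.cast : ℤ → ℝ)) * g = !![1, 0; t, 1] * !![s⁻¹, 0; 0, s] * k := by
  obtain ⟨G, rfl⟩ : ∃ G : GL (Fin 2) ℝ, G.val = g :=
    ⟨.mkOfDetNeZero g (by rcases hg with h | h <;> simp [h]), rfl⟩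
  obtain ⟨γ, hγ⟩ := ModularGroup.exists_smul_mem_fd (G • I)
  have hdet : |(mapGL ℝ (S⁻¹ * γ) * G).det.val| = 1 := by
    simpa [abs_eq] using hg
  have hmem : S • (mapGL ℝ (S⁻¹ * γ) * G) • I ∈ 𝒟 := by
    rw [mul_smul, ← MulAction.compHom_smul_def, mul_smul, smul_inv_smul]
    exact hγ
  obtain ⟨t, s, k, ht, hs, hk, heq⟩ := mem_gaussSet_of_S_smul_smul_I_mem_fd hdet hmem
  exact ⟨(S⁻¹ * γ).val, t, s, k, .inl (S⁻¹ * γ).det_coe, ht, hs, hk, heq⟩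
end

section
/- Let f₁ and f₂ be binary cubic forms with real coefficients such that disc(f₁) = disc(f₂) = δ with δ ∈ {1, −1}, where disc(aX³ + bX²Y + cXY² + dY³) = 18abcd + b²c² − 4ac³ − 4b³d − 27a²d². Then there exists a matrix M ∈ GL_2(ℝ) with det(M) = ±1 such that M·f₁ = f₂, where (M·f)(v) = det(M)^{-1} · f(Mᵀ v). In other words, SL_2^±(ℝ) = {g ∈ GL_2(ℝ) : det(g) = ±1} acts transitively on the set of real binary cubic forms of discriminant δ, for each δ ∈ {1, −1}. -/
/-!
A zero of `f` on the projective line can be moved to `(1 : 0)` by `SL₂`, after which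
`f = Y (bX² + cXY + dY²)` has discriminant `b² (c² - 4bd)`. When this is a unit so is `b`;
completing the square and rescaling by `(X, Y) ↦ (b⁻¹X, bY)` then turns `f` into `X²Y + dY³`,
where `d` is determined by the discriminant `-4d`. Real forms have a zero because real cubic
polynomials do.
-/

open Filter Polynomial
open scoped MatrixGroups

lemma surjective_eval_of_odd_natDegree {p : ℝ[X]} (hp : Odd p.natDegree) :
    Function.Surjective fun x ↦ p.eval x := by
  have hdeg : 0 < p.degree := natDegree_pos_iff_degree_pos.mp hp.pos
  have hdeg_neg : 0 < (p.comp (-X)).degree := by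
    rw [← natDegree_pos_iff_degree_pos, natDegree_comp, natDegree_neg, natDegree_X, mul_one]
    exact hp.pos
  have hlead_neg : (p.comp (-X)).leadingCoeff = -p.leadingCoeff := by
    rw [comp_neg_X_leadingCoeff_eq, hp.neg_one_pow, neg_one_mul]
  have heval : (fun x ↦ p.eval x) = (fun x ↦ (p.comp (-X)).eval x) ∘ Neg.neg := by
    ext x
    simp
  rcases le_total 0 p.leadingCoeff with hlead | hlead
  · refine p.continuous.surjective (tendsto_atTop_of_leadingCoeff_nonneg p hdeg hlead) ?_
    rw [heval]
    exact (tendsto_atBot_of_leadingCoeff_nonpos _ hdeg_neg (by linarith)).comp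
      tendsto_neg_atBot_atTop
  · refine p.continuous.surjective' ?_ (tendsto_atBot_of_leadingCoeff_nonpos p hdeg hlead)
    rw [heval]
    exact (tendsto_atTop_of_leadingCoeff_nonneg _ hdeg_neg (by linarith)).comp
      tendsto_neg_atBot_atTop

/-- The binary cubic form `aX³ + bX²Y + cXY² + dY³` over `R`, encoded by its coefficients. -/
@[ext]
structure BinaryCubicForm (R : Type*) where
  a : R
  b : R
  c : R
  d : R

namespace BinaryCubicForm

section CommRing

variable {R : Type*} [CommRing R]

/-- The value of the form `f` at the vector `(x, y)`. -/
def eval (f : BinaryCubicForm R) (x y : R) : R :=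
  f.a * x ^ 3 + f.b * x ^ 2 * y + f.c * x * y ^ 2 + f.d * y ^ 3

/-- The discriminant of a binary cubic form. -/
def disc (f : BinaryCubicForm R) : R :=
  18 * f.a * f.b * f.c * f.d + f.b ^ 2 * f.c ^ 2 - 4 * f.a * f.c ^ 3 - 4 * f.b ^ 3 * f.d
    - 27 * f.a ^ 2 * f.d ^ 2

/-- The linear change of variables `v ↦ f (Mᵀ v)`; the transpose makes it a left action of
matrices on forms. -/
def subst (M : Matrix (Fin 2) (Fin 2) R) (f : BinaryCubicForm R) : BinaryCubicForm R where
  a := f.eval (M 0 0) (M 0 1)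
  b := 3 * f.a * M 0 0 ^ 2 * M 1 0 + f.b * (M 0 0 ^ 2 * M 1 1 + 2 * M 0 0 * M 1 0 * M 0 1)
    + f.c * (2 * M 0 0 * M 0 1 * M 1 1 + M 1 0 * M 0 1 ^ 2) + 3 * f.d * M 0 1 ^ 2 * M 1 1
  c := 3 * f.a * M 0 0 * M 1 0 ^ 2 + f.b * (2 * M 0 0 * M 1 0 * M 1 1 + M 1 0 ^ 2 * M 0 1)
    + f.c * (M 0 0 * M 1 1 ^ 2 + 2 * M 1 0 * M 0 1 * M 1 1) + 3 * f.d * M 0 1 * M 1 1 ^ 2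
  d := f.eval (M 1 0) (M 1 1)

lemma eval_subst (M : Matrix (Fin 2) (Fin 2) R) (f : BinaryCubicForm R) (x y : R) :
    (f.subst M).eval x y = f.eval (M 0 0 * x + M 1 0 * y) (M 0 1 * x + M 1 1 * y) := by
  simp only [subst, eval]
  ring

lemma disc_subst (M : Matrix (Fin 2) (Fin 2) R) (f : BinaryCubicForm R) :
    (f.subst M).disc = M.det ^ 6 * f.disc := by
  simp only [subst, eval, disc, Matrix.det_fin_two]
  ring

lemma one_subst (f : BinaryCubicForm R) : f.subst 1 = f := by
  ext <;> simp [subst, eval]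

lemma mul_subst (M N : Matrix (Fin 2) (Fin 2) R) (f : BinaryCubicForm R) :
    f.subst (M * N) = (f.subst N).subst M := by
  ext <;> simp only [subst, eval, Matrix.mul_apply, Fin.sum_univ_two] <;> ring

/-- The action of `SL₂` on binary cubic forms by linear change of variables. It is the restriction
of the action `(M • f) v = (det M)⁻¹ f (Mᵀ v)` of `GL₂`, the twist being trivial on `SL₂`. -/
instance : SMul SL(2, R) (BinaryCubicForm R) := ⟨fun g f ↦ f.subst g⟩

lemma smul_eq_subst (g : SL(2, R)) (f : BinaryCubicForm R) : g • f = f.subst g := rfl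

instance : MulAction SL(2, R) (BinaryCubicForm R) where
  one_smul f := by
    rw [smul_eq_subst, Matrix.SpecialLinearGroup.coe_one, one_subst]
  mul_smul g h f := by
    simp only [smul_eq_subst, Matrix.SpecialLinearGroup.coe_mul, mul_subst]

@[simp]
lemma disc_smul (g : SL(2, R)) (f : BinaryCubicForm R) : (g • f).disc = f.disc := by
  simp [smul_eq_subst, disc_subst]

/-- `f` has a zero on the projective line. Over a ring, a point of the projective line is taken to
be represented by a unimodular vector; over a field these are the nonzero vectors. -/
def HasProjectiveZero (f : BinaryCubicForm R) : Prop :=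
  ∃ x y : R, IsCoprime x y ∧ f.eval x y = 0

lemma HasProjectiveZero.exists_smul_a_eq_zero {f : BinaryCubicForm R} (hf : f.HasProjectiveZero) :
    ∃ g : SL(2, R), (g • f).a = 0 := by
  obtain ⟨x, y, hxy, hzero⟩ := hf
  obtain ⟨g, rfl, rfl⟩ := hxy.exists_SL2_row 0
  exact ⟨g, hzero⟩

lemma isUnit_b_of_a_eq_zero {f : BinaryCubicForm R} (ha : f.a = 0) (hf : IsUnit f.disc) :
    IsUnit f.b := by
  have hdisc : f.disc = f.b * (f.b * (f.c ^ 2 - 4 * f.b * f.d)) := by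
    simp only [disc, ha]
    ring
  exact isUnit_of_mul_isUnit_left (hdisc ▸ hf)

/-- The form `X²Y + dY³`, the representative to which forms with a projective zero are reduced. -/
def normalForm (d : R) : BinaryCubicForm R := ⟨0, 1, 0, d⟩

lemma disc_normalForm (d : R) : (normalForm d).disc = -(2 ^ 2 * d) := by
  simp only [disc, normalForm]
  ring

lemma disc_normalForm_injective (h2 : IsUnit (2 : R)) :
    Function.Injective fun d : R ↦ (normalForm d).disc := fun d e h ↦ by
  simpa only [disc_normalForm, neg_inj, (h2.pow 2).mul_right_inj] using h

lemma exists_smul_eq_normalForm_of_a_eq_zero (h2 : IsUnit (2 : R)) {f : BinaryCubicForm R}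
    (ha : f.a = 0) (hb : IsUnit f.b) : ∃ (g : SL(2, R)) (d : R), g • f = normalForm d := by
  obtain ⟨u, hu⟩ := hb.exists_right_inv
  obtain ⟨t, ht⟩ := h2.exists_right_inv
  -- `X ↦ b⁻¹X - (c/2)Y`, `Y ↦ bY` completes the square and rescales at once.
  let M : Matrix (Fin 2) (Fin 2) R := !![u, 0; -(f.c * t), f.b]
  have hdet : M.det = 1 := by
    rw [Matrix.det_fin_two_of, zero_mul, sub_zero, mul_comm, hu]
  have hMa : (f.subst M).a = 0 := by
    simp [subst, eval, M, ha]
  have hMb : (f.subst M).b = (f.b * u) ^ 2 := by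
    simp only [subst, M, ha, Matrix.of_apply, Matrix.cons_val', Matrix.cons_val_zero,
      Matrix.cons_val_one, Matrix.cons_val_fin_one]
    ring
  have hMc : (f.subst M).c = f.b ^ 2 * u * f.c * (1 - 2 * t) := by
    simp only [subst, M, ha, Matrix.of_apply, Matrix.cons_val', Matrix.cons_val_zero,
      Matrix.cons_val_one, Matrix.cons_val_fin_one]
    ring
  refine ⟨⟨M, hdet⟩, (f.subst M).d, BinaryCubicForm.ext hMa ?_ ?_ rfl⟩
  · exact hMb.trans (by rw [hu, one_pow, normalForm])
  · exact hMc.trans (by rw [ht, sub_self, mul_zero, normalForm])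

lemma HasProjectiveZero.exists_smul_eq_normalForm (h2 : IsUnit (2 : R)) {f : BinaryCubicForm R}
    (hf : f.HasProjectiveZero) (hdisc : IsUnit f.disc) :
    ∃ (g : SL(2, R)) (d : R), g • f = normalForm d := by
  obtain ⟨g, ha⟩ := hf.exists_smul_a_eq_zero
  have hb : IsUnit (g • f).b := isUnit_b_of_a_eq_zero ha (by rwa [disc_smul])
  obtain ⟨h, d, hd⟩ := exists_smul_eq_normalForm_of_a_eq_zero h2 ha hb
  exact ⟨h * g, d, by rw [mul_smul, hd]⟩

end CommRing

lemma hasProjectiveZero_of_forall_cubic_exists_isRoot {K : Type*} [Field K]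
    (hK : ∀ p : K[X], p.natDegree = 3 → ∃ t, p.IsRoot t) (f : BinaryCubicForm K) :
    f.HasProjectiveZero := by
  by_cases ha : f.a = 0
  · exact ⟨1, 0, isCoprime_one_left, by simp [eval, ha]⟩
  · let P : Cubic K := ⟨f.a, f.b, f.c, f.d⟩
    obtain ⟨t, ht⟩ := hK P.toPoly (Cubic.natDegree_of_a_ne_zero ha)
    exact ⟨t, 1, isCoprime_one_right, by simpa [P, Cubic.toPoly, eval] using ht⟩

lemma hasProjectiveZero_of_real (f : BinaryCubicForm ℝ) : f.HasProjectiveZero :=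
  f.hasProjectiveZero_of_forall_cubic_exists_isRoot fun p hp ↦
    surjective_eval_of_odd_natDegree (by rw [hp]; decide) 0

end BinaryCubicForm

open BinaryCubicForm

theorem stmt18_general {R : Type*} [CommRing R] (h2 : IsUnit (2 : R)) {δ : R} (hδ : IsUnit δ)
    {f₁ f₂ : BinaryCubicForm R} (hf₁ : f₁.HasProjectiveZero) (hf₂ : f₂.HasProjectiveZero)
    (h₁ : f₁.disc = δ) (h₂ : f₂.disc = δ) : ∃ g : SL(2, R), g • f₁ = f₂ := by
  obtain ⟨g₁, d₁, hg₁⟩ := hf₁.exists_smul_eq_normalForm h2 (h₁ ▸ hδ)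
  obtain ⟨g₂, d₂, hg₂⟩ := hf₂.exists_smul_eq_normalForm h2 (h₂ ▸ hδ)
  have hd : d₁ = d₂ := disc_normalForm_injective h2 <| by
    simp only [← hg₁, ← hg₂, disc_smul, h₁, h₂]
  exact ⟨g₂⁻¹ * g₁, by rw [mul_smul, hg₁, hd, ← hg₂, inv_smul_smul]⟩

/-- Let `f₁, f₂` be real binary cubic forms with
`disc(f₁) = disc(f₂) = δ` where `δ ∈ {1, −1}` and
`disc(aX³+bX²Y+cXY²+dY³) = 18abcd + b²c² − 4ac³ − 4b³d − 27a²d²`. Then there exists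
`M ∈ GL₂(ℝ)` with `det M = ±1` and `M·f₁ = f₂`, where `(M·f)(v) = det(M)⁻¹ · f(Mᵀ v)`:
the group `SL₂^±(ℝ)` acts transitively on the real binary cubic forms of
discriminant `δ`. -/
theorem stmt18 (δ : ℝ) (hδ : δ = 1 ∨ δ = -1)
    (a₁ b₁ c₁ d₁ a₂ b₂ c₂ d₂ : ℝ)
    (h₁ : 18*a₁*b₁*c₁*d₁ + b₁^2*c₁^2 - 4*a₁*c₁^3 - 4*b₁^3*d₁ - 27*a₁^2*d₁^2 = δ)
    (h₂ : 18*a₂*b₂*c₂*d₂ + b₂^2*c₂^2 - 4*a₂*c₂^3 - 4*b₂^3*d₂ - 27*a₂^2*d₂^2 = δ) :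
    ∃ M : Matrix (Fin 2) (Fin 2) ℝ, (M.det = 1 ∨ M.det = -1) ∧
      ∀ x y : ℝ,
        a₂*x^3 + b₂*x^2*y + c₂*x*y^2 + d₂*y^3 =
          (M.det)⁻¹ * (a₁*(M 0 0*x + M 1 0*y)^3
            + b₁*(M 0 0*x + M 1 0*y)^2*(M 0 1*x + M 1 1*y)
            + c₁*(M 0 0*x + M 1 0*y)*(M 0 1*x + M 1 1*y)^2
            + d₁*(M 0 1*x + M 1 1*y)^3) := by
  obtain ⟨g, hg⟩ := stmt18_general (IsUnit.mk0 2 two_ne_zero)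
    (IsUnit.mk0 δ (by rcases hδ with rfl | rfl <;> norm_num))
    (hasProjectiveZero_of_real ⟨a₁, b₁, c₁, d₁⟩) (hasProjectiveZero_of_real ⟨a₂, b₂, c₂, d₂⟩) h₁ h₂
  refine ⟨g, Or.inl g.det_coe, fun x y ↦ ?_⟩
  rw [g.det_coe, inv_one, one_mul]
  exact (congrArg (eval · x y) hg).symm.trans (eval_subst _ _ x y)
end

section
/- Let a, b, c, d ∈ ℤ. Define a ℤ-bilinear multiplication on the free ℤ-module ℤ³ with basis (e₀, ω₁, ω₂) by declaring e₀ to be the multiplicative identity and setting ω₁·ω₂ = ω₂·ω₁ = −ad·e₀, ω₁·ω₁ = −ac·e₀ − b·ω₁ + a·ω₂, and ω₂·ω₂ = −bd·e₀ − d·ω₁ + c·ω₂. Then this multiplication is commutative and associative, making ℤ³ a commutative ring S with unit e₀; moreover, the determinant of the 3×3 matrix (Tr(x_i x_j))_{i,j}, where (x₀, x₁, x₂) = (e₀, ω₁, ω₂) and Tr(x) denotes the trace of the ℤ-linear multiplication-by-x map on S, equals 18abcd + b²c² − 4ac³ − 4b³d − 27a²d². -/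
/-- The multiplication on `ℤ³` (with basis `e₀ = Pi.single 0 1`, `ω₁ = Pi.single 1 1`,
`ω₂ = Pi.single 2 1`) obtained by ℤ-bilinear extension of: `e₀` is the identity,
`ω₁ω₂ = ω₂ω₁ = −ad·e₀`, `ω₁² = −ac·e₀ − b·ω₁ + a·ω₂`, `ω₂² = −bd·e₀ − d·ω₁ + c·ω₂`. -/
def cubicRingMul (a b c d : ℤ) (x y : Fin 3 → ℤ) : Fin 3 → ℤ :=
  ![x 0 * y 0 - a*c*(x 1 * y 1) - a*d*(x 1 * y 2 + x 2 * y 1) - b*d*(x 2 * y 2),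
    x 0 * y 1 + x 1 * y 0 - b*(x 1 * y 1) - d*(x 2 * y 2),
    x 0 * y 2 + x 2 * y 0 + a*(x 1 * y 1) + c*(x 2 * y 2)]

/-- The trace of the ℤ-linear multiplication-by-`x` endomorphism of `ℤ³` with respect to
the multiplication `cubicRingMul a b c d`. -/
def cubicRingTrace (a b c d : ℤ) (x : Fin 3 → ℤ) : ℤ :=
  Matrix.trace (Matrix.of fun i j => cubicRingMul a b c d x (Pi.single j 1) i)

/-! If `θ` is a root of `aX³ + bX² + cX + d`, then `ω₁ = aθ` and `ω₂ = aθ² + bθ + c = -d/θ`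
multiply by the prescribed rules, and Vieta's formulas predict `Tr ω₁ = -b` and `Tr ω₂ = c`.
Over any commutative ring these rules define a ring, because its axioms are polynomial
identities in the coordinates. The traces of the basis `(1, ω₁, ω₂)` determine the Gram matrix
of the trace form by linearity. -/

/-- The Delone–Faddeev cubic ring of the binary cubic form `aX³ + bX²Y + cXY² + dY³`, whose
coefficients are recorded as a `Cubic`, so that the ring structure can depend on them. Elements
are coordinate vectors with respect to `(1, ω₁, ω₂)`. -/
def DeloneFaddeev {R : Type*} (_f : Cubic R) : Type _ := Fin 3 → R

namespace DeloneFaddeev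

variable {R : Type*} {f : Cubic R}

@[ext]
lemma ext {x y : DeloneFaddeev f} (h₀ : x 0 = y 0) (h₁ : x 1 = y 1) (h₂ : x 2 = y 2) : x = y :=
  funext (Fin.forall_fin_succ.2 ⟨h₀, Fin.forall_fin_two.2 ⟨h₁, h₂⟩⟩)

variable [CommRing R]

instance : AddCommGroup (DeloneFaddeev f) := inferInstanceAs (AddCommGroup (Fin 3 → R))

instance : Module R (DeloneFaddeev f) := inferInstanceAs (Module R (Fin 3 → R))

instance : One (DeloneFaddeev f) := ⟨(Pi.single 0 1 : Fin 3 → R)⟩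

instance : Mul (DeloneFaddeev f) where
  mul x y := (![x 0 * y 0 - f.a * f.c * (x 1 * y 1) - f.a * f.d * (x 1 * y 2 + x 2 * y 1)
        - f.b * f.d * (x 2 * y 2),
      x 0 * y 1 + x 1 * y 0 - f.b * (x 1 * y 1) - f.d * (x 2 * y 2),
      x 0 * y 2 + x 2 * y 0 + f.a * (x 1 * y 1) + f.c * (x 2 * y 2)] : Fin 3 → R)

@[simp] lemma zero_apply (i : Fin 3) : (0 : DeloneFaddeev f) i = 0 := rfl

@[simp] lemma add_apply (x y : DeloneFaddeev f) (i : Fin 3) : (x + y) i = x i + y i := rfl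

@[simp] lemma neg_apply (x : DeloneFaddeev f) (i : Fin 3) : (-x) i = -x i := rfl

@[simp] lemma smul_apply (k : R) (x : DeloneFaddeev f) (i : Fin 3) : (k • x) i = k * x i := rfl

@[simp] lemma one_apply_zero : (1 : DeloneFaddeev f) 0 = 1 := rfl

@[simp] lemma one_apply_one : (1 : DeloneFaddeev f) 1 = 0 := rfl

@[simp] lemma one_apply_two : (1 : DeloneFaddeev f) 2 = 0 := rfl

@[simp] lemma mul_apply_zero (x y : DeloneFaddeev f) :
    (x * y) 0 = x 0 * y 0 - f.a * f.c * (x 1 * y 1) - f.a * f.d * (x 1 * y 2 + x 2 * y 1)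
      - f.b * f.d * (x 2 * y 2) := rfl

@[simp] lemma mul_apply_one (x y : DeloneFaddeev f) :
    (x * y) 1 = x 0 * y 1 + x 1 * y 0 - f.b * (x 1 * y 1) - f.d * (x 2 * y 2) := rfl

@[simp] lemma mul_apply_two (x y : DeloneFaddeev f) :
    (x * y) 2 = x 0 * y 2 + x 2 * y 0 + f.a * (x 1 * y 1) + f.c * (x 2 * y 2) := rfl

protected lemma mul_comm (x y : DeloneFaddeev f) : x * y = y * x := by
  ext <;> simp only [mul_apply_zero, mul_apply_one, mul_apply_two] <;> ring

protected lemma mul_assoc (x y z : DeloneFaddeev f) : x * y * z = x * (y * z) := by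
  ext <;> simp only [mul_apply_zero, mul_apply_one, mul_apply_two] <;> ring

protected lemma one_mul (x : DeloneFaddeev f) : 1 * x = x := by
  ext <;> simp

protected lemma add_mul (x y z : DeloneFaddeev f) : (x + y) * z = x * z + y * z := by
  ext <;> simp only [add_apply, mul_apply_zero, mul_apply_one, mul_apply_two] <;> ring

protected lemma smul_mul_assoc (k : R) (x y : DeloneFaddeev f) : k • x * y = k • (x * y) := by
  ext <;> simp only [smul_apply, mul_apply_zero, mul_apply_one, mul_apply_two] <;> ring

protected lemma mul_smul_comm (k : R) (x y : DeloneFaddeev f) : x * k • y = k • (x * y) := by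
  rw [DeloneFaddeev.mul_comm, DeloneFaddeev.smul_mul_assoc, DeloneFaddeev.mul_comm]

instance : CommRing (DeloneFaddeev f) where
  __ := (inferInstance : AddCommGroup (DeloneFaddeev f))
  mul_comm := DeloneFaddeev.mul_comm
  mul_assoc := DeloneFaddeev.mul_assoc
  one_mul := DeloneFaddeev.one_mul
  mul_one x := by rw [DeloneFaddeev.mul_comm, DeloneFaddeev.one_mul]
  right_distrib := DeloneFaddeev.add_mul
  left_distrib x y z := by simp only [DeloneFaddeev.mul_comm x, DeloneFaddeev.add_mul]
  zero_mul x := by ext <;> simp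
  mul_zero x := by ext <;> simp

instance : Algebra R (DeloneFaddeev f) :=
  Algebra.ofModule DeloneFaddeev.smul_mul_assoc DeloneFaddeev.mul_smul_comm

variable (f)

/-- The basis `(1, ω₁, ω₂)` of the cubic ring over `R`. -/
noncomputable def basis : Module.Basis (Fin 3) R (DeloneFaddeev f) := Pi.basisFun R (Fin 3)

lemma basis_eq_single (i : Fin 3) : basis f i = (Pi.single i 1 : Fin 3 → R) :=
  Pi.basisFun_apply R (Fin 3) i

lemma basis_apply (i j : Fin 3) : basis f i j = if j = i then 1 else 0 := by
  rw [basis_eq_single, Pi.single_apply]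

lemma basis_zero : basis f 0 = 1 := basis_eq_single f 0

lemma basis_one_mul_basis_two : basis f 1 * basis f 2 = -(f.a * f.d) • basis f 0 := by
  ext <;> simp [basis_apply]

lemma basis_one_mul_basis_one :
    basis f 1 * basis f 1 =
      -(f.a * f.c) • basis f 0 + (-f.b) • basis f 1 + f.a • basis f 2 := by
  ext <;> simp [basis_apply]

lemma basis_two_mul_basis_two :
    basis f 2 * basis f 2 =
      -(f.b * f.d) • basis f 0 + (-f.d) • basis f 1 + f.c • basis f 2 := by
  ext <;> simp [basis_apply]

variable {f}

lemma leftMulMatrix_basis (x : DeloneFaddeev f) :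
    Algebra.leftMulMatrix (basis f) x = Matrix.of fun i j => (x * basis f j) i := by
  ext i j
  exact Algebra.leftMulMatrix_eq_repr_mul (basis f) x i j

lemma trace_apply (x : DeloneFaddeev f) :
    Algebra.trace R (DeloneFaddeev f) x = 3 * x 0 - f.b * x 1 + f.c * x 2 := by
  rw [Algebra.trace_eq_matrix_trace (basis f), leftMulMatrix_basis, Matrix.trace_fin_three]
  simp only [Matrix.of_apply, mul_apply_zero, mul_apply_one, mul_apply_two, basis_apply,
    Fin.reduceEq, if_true, if_false]
  ring

variable (f)

lemma traceMatrix_basis :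
    Algebra.traceMatrix R (basis f) =
      !![3, -f.b, f.c;
        -f.b, f.b ^ 2 - 2 * f.a * f.c, -3 * f.a * f.d;
        f.c, -3 * f.a * f.d, f.c ^ 2 - 2 * f.b * f.d] := by
  ext i j
  rw [Algebra.traceMatrix_apply, Algebra.traceForm_apply, trace_apply]
  fin_cases i <;> fin_cases j <;> simp [basis_apply] <;> ring

theorem discr_basis : Algebra.discr R (basis f) = f.discr := by
  rw [Algebra.discr_def, traceMatrix_basis, Matrix.det_fin_three, Cubic.discr]
  simp only [Matrix.of_apply, Matrix.cons_val]
  ring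

end DeloneFaddeev

lemma cubicRingTrace_eq_trace {a b c d : ℤ} (x : DeloneFaddeev (⟨a, b, c, d⟩ : Cubic ℤ)) :
    cubicRingTrace a b c d x = Algebra.trace ℤ (DeloneFaddeev ⟨a, b, c, d⟩) x := by
  rw [Algebra.trace_eq_matrix_trace (DeloneFaddeev.basis _), DeloneFaddeev.leftMulMatrix_basis]
  simp only [DeloneFaddeev.basis_eq_single]
  rfl

lemma of_cubicRingTrace_cubicRingMul (a b c d : ℤ) :
    Matrix.of (fun i j : Fin 3 =>
        cubicRingTrace a b c d (cubicRingMul a b c d (Pi.single i 1) (Pi.single j 1))) =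
      Algebra.traceMatrix ℤ (DeloneFaddeev.basis ⟨a, b, c, d⟩) := by
  ext i j
  rw [Algebra.traceMatrix_apply, Algebra.traceForm_apply, ← cubicRingTrace_eq_trace,
    DeloneFaddeev.basis_eq_single, DeloneFaddeev.basis_eq_single]
  rfl

open DeloneFaddeev in
theorem stmt19_general {R : Type*} [CommRing R] (f : Cubic R) :
    basis f 0 = 1 ∧
      basis f 1 * basis f 2 = -(f.a * f.d) • basis f 0 ∧
      basis f 1 * basis f 1 =
        -(f.a * f.c) • basis f 0 + (-f.b) • basis f 1 + f.a • basis f 2 ∧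
      basis f 2 * basis f 2 =
        -(f.b * f.d) • basis f 0 + (-f.d) • basis f 1 + f.c • basis f 2 ∧
      Algebra.discr R (basis f) = f.discr :=
  ⟨basis_zero f, basis_one_mul_basis_two f, basis_one_mul_basis_one f,
    basis_two_mul_basis_two f, discr_basis f⟩

/-- Let `a, b, c, d ∈ ℤ`. The ℤ-bilinear multiplication on `ℤ³` with
basis `(e₀, ω₁, ω₂)` determined by `e₀` being the identity and
`ω₁ω₂ = ω₂ω₁ = −ad·e₀`, `ω₁² = −ac·e₀ − b·ω₁ + a·ω₂`, `ω₂² = −bd·e₀ − d·ω₁ + c·ω₂`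
is commutative and associative, making `ℤ³` a commutative unital ring `S`; moreover the
determinant of the trace form matrix `(Tr(xᵢxⱼ))ᵢⱼ` with respect to the basis
`(e₀, ω₁, ω₂)` equals `18abcd + b²c² − 4ac³ − 4b³d − 27a²d²`, the discriminant of the
binary cubic form `aX³ + bX²Y + cXY² + dY³`. -/
theorem stmt19 (a b c d : ℤ) :
    -- `cubicRingMul` is ℤ-bilinear
    (∀ x x' y : Fin 3 → ℤ,
      cubicRingMul a b c d (x + x') y = cubicRingMul a b c d x y + cubicRingMul a b c d x' y) ∧
    (∀ x y y' : Fin 3 → ℤ,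
      cubicRingMul a b c d x (y + y') = cubicRingMul a b c d x y + cubicRingMul a b c d x y') ∧
    (∀ (k : ℤ) (x y : Fin 3 → ℤ),
      cubicRingMul a b c d (k • x) y = k • cubicRingMul a b c d x y) ∧
    (∀ (k : ℤ) (x y : Fin 3 → ℤ),
      cubicRingMul a b c d x (k • y) = k • cubicRingMul a b c d x y) ∧
    -- it has the prescribed structure constants
    (cubicRingMul a b c d (Pi.single 1 1) (Pi.single 2 1) = -(a*d) • Pi.single 0 1) ∧
    (cubicRingMul a b c d (Pi.single 2 1) (Pi.single 1 1) = -(a*d) • Pi.single 0 1) ∧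
    (cubicRingMul a b c d (Pi.single 1 1) (Pi.single 1 1) =
      -(a*c) • Pi.single 0 1 + (-b) • Pi.single 1 1 + a • Pi.single 2 1) ∧
    (cubicRingMul a b c d (Pi.single 2 1) (Pi.single 2 1) =
      -(b*d) • Pi.single 0 1 + (-d) • Pi.single 1 1 + c • Pi.single 2 1) ∧
    -- `e₀` is a multiplicative identity
    (∀ x : Fin 3 → ℤ, cubicRingMul a b c d (Pi.single 0 1) x = x) ∧
    (∀ x : Fin 3 → ℤ, cubicRingMul a b c d x (Pi.single 0 1) = x) ∧
    -- commutativity and associativity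
    (∀ x y : Fin 3 → ℤ, cubicRingMul a b c d x y = cubicRingMul a b c d y x) ∧
    (∀ x y z : Fin 3 → ℤ,
      cubicRingMul a b c d (cubicRingMul a b c d x y) z =
        cubicRingMul a b c d x (cubicRingMul a b c d y z)) ∧
    -- determinant of the trace form equals the discriminant of the cubic form
    ((Matrix.of fun i j : Fin 3 =>
        cubicRingTrace a b c d
          (cubicRingMul a b c d (Pi.single i 1) (Pi.single j 1))).det =
      18*a*b*c*d + b^2*c^2 - 4*a*c^3 - 4*b^3*d - 27*a^2*d^2) := by
  let f : Cubic ℤ := ⟨a, b, c, d⟩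
  let S := DeloneFaddeev f
  obtain ⟨-, h₁₂, h₁₁, h₂₂, h_discr⟩ := stmt19_general f
  simp only [DeloneFaddeev.basis_eq_single] at h₁₂ h₁₁ h₂₂
  refine ⟨add_mul (R := S), mul_add (R := S), DeloneFaddeev.smul_mul_assoc (f := f),
    DeloneFaddeev.mul_smul_comm (f := f), h₁₂, (mul_comm (G := S) _ _).trans h₁₂, h₁₁, h₂₂,
    one_mul (M := S), mul_one (M := S), mul_comm (G := S), mul_assoc (G := S), ?_⟩
  rw [of_cubicRingTrace_cubicRingMul, ← Algebra.discr_def, h_discr, Cubic.discr]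
  ring
end
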